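/- arXiv:1502.05127 — 3 statements merged into one kernel-verified Lean document; each statement's English description precedes it below -/
import Mathlib

section
/- If f and g both belong to K(3/5), then the function h = (f+g)/2 is injective on 𝔻 and its image h(𝔻) is starlike with respect to 0 (i.e., for every w ∈ h(𝔻) and every t ∈ [0,1], t·w ∈ h(𝔻)); that is, (f+g)/2 ∈ S*. -/
/-- The unit disk `{z : ℂ | |z| < 1}`. -/
noncomputable def unitDisk : Set ℂ := Metric.ball 0 1

/-- The extremal convex function of order `α`:
`k_α(z) = ((1-z)^(2α-1) - 1)/(1-2α)` (so that `k_α(0)=0`, `k_α'(0)=1`),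
with `k_{1/2}(z) = -log(1-z)` (principal branches). -/
noncomputable def kfun (α : ℝ) (z : ℂ) : ℂ :=
  if α = 1 / 2 then -Complex.log (1 - z)
  else ((1 - z) ^ ((2 * α - 1 : ℝ) : ℂ) - 1) / ((1 - 2 * α : ℝ) : ℂ)

/-- `h_α(z) = k_α(z)/z` for `z ≠ 0`, `h_α(0) = 1`. -/
noncomputable def hfun (α : ℝ) (z : ℂ) : ℂ :=
  if z = 0 then 1 else kfun α z / z

/-- `f ∈ K(α)`: `f` is analytic on the unit disk, normalized by `f(0)=0`, `f'(0)=1`,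
with nonvanishing derivative and `Re(1 + z f''(z)/f'(z)) > α` on the disk. -/
def IsConvexOfOrder (α : ℝ) (f : ℂ → ℂ) : Prop :=
  DifferentiableOn ℂ f unitDisk ∧ f 0 = 0 ∧ deriv f 0 = 1 ∧
    ∀ z ∈ unitDisk, deriv f z ≠ 0 ∧
      α < (1 + z * deriv (deriv f) z / deriv f z).re

section

open Complex Set Filter Topology Metric

theorem deriv_nonneg_of_eventually_le_left {φ : ℝ → ℝ} {d a : ℝ} (h : HasDerivAt φ d a)
    (hle : ∀ᶠ t in 𝓝[<] a, φ t ≤ φ a) : 0 ≤ d := by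
  have h1 := (hasDerivAt_iff_tendsto_slope_left_right.1 h).1
  refine ge_of_tendsto h1 ?_
  filter_upwards [hle, self_mem_nhdsWithin] with t ht hta
  rw [slope_def_field]
  exact div_nonneg_of_nonpos (by linarith) (by linarith [mem_Iio.1 hta])

theorem hasDerivAt_re {F : ℝ → ℂ} {F' : ℂ} {t : ℝ} (h : HasDerivAt F F' t) :
    HasDerivAt (fun s => (F s).re) F'.re t :=
  reCLM.hasFDerivAt.comp_hasDerivAt t h

theorem hasDerivAt_im {F : ℝ → ℂ} {F' : ℂ} {t : ℝ} (h : HasDerivAt F F' t) :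
    HasDerivAt (fun s => (F s).im) F'.im t :=
  imCLM.hasFDerivAt.comp_hasDerivAt t h

/-- Derivative of the squared norm of a holomorphic function along a curve. -/
theorem hasDerivAt_normSq_comp {w : ℂ → ℂ} {γ : ℝ → ℂ} {w' γ' : ℂ} {t : ℝ}
    (hw : HasDerivAt w w' (γ t)) (hγ : HasDerivAt γ γ' t) :
    HasDerivAt (fun s => normSq (w (γ s)))
      (2 * ((starRingEnd ℂ) (w (γ t)) * (w' * γ')).re) t := by
  have h : HasDerivAt (fun s => w (γ s)) (w' * γ') t := hw.comp t hγ
  have hre := hasDerivAt_re h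
  have him := hasDerivAt_im h
  have := (hre.mul hre).add (him.mul him)
  simp only [normSq_apply]
  refine this.congr_deriv ?_
  simp [mul_re]
  ring

theorem hasDerivAt_ofReal_mul (z : ℂ) (t : ℝ) : HasDerivAt (fun s : ℝ => (s : ℂ) * z) z t := by
  simpa using (ofRealCLM.hasDerivAt (x := t)).mul_const z

theorem hasDerivAt_mul_exp_I (z : ℂ) (t : ℝ) :
    HasDerivAt (fun s : ℝ => z * exp (s * I)) (z * exp (t * I) * I) t := by
  have h : HasDerivAt (fun s : ℝ => (s : ℂ) * I) I t := hasDerivAt_ofReal_mul I t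
  simpa [mul_assoc] using (h.cexp.const_mul z)

/-- **Jack's lemma**. -/
theorem jack {w : ℂ → ℂ} {z₀ : ℂ} (hw : DifferentiableOn ℂ w (ball 0 1)) (h0 : w 0 = 0)
    (hz : z₀ ∈ ball (0 : ℂ) 1) (h1' : 1 ≤ ‖w z₀‖) (hlt : ∀ z, ‖z‖ < ‖z₀‖ → ‖w z‖ < 1) :
    ‖w z₀‖ = 1 ∧ ∃ k : ℝ, 1 ≤ k ∧ z₀ * deriv w z₀ = k * w z₀ := by
  have hz₀ : z₀ ≠ 0 := by rintro rfl; norm_num [h0] at h1'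
  have hz1 : ‖z₀‖ < 1 := by simpa using hz
  have hd : HasDerivAt w (deriv w z₀) z₀ :=
    (hw.differentiableAt (isOpen_ball.mem_nhds hz)).hasDerivAt
  have hsub : ball (0 : ℂ) ‖z₀‖ ⊆ ball 0 1 := ball_subset_ball hz1.le
  set κ : ℂ := (starRingEnd ℂ) (w z₀) * (deriv w z₀ * z₀) with hκ
  have hle : ∀ z, ‖z‖ = ‖z₀‖ → ‖w z‖ ≤ 1 := by
    intro z hzz
    have hzb : z ∈ closure (ball (0 : ℂ) ‖z₀‖) := by
      rw [closure_ball _ (norm_ne_zero_iff.2 hz₀)]; simp [hzz]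
    have hcw : ContinuousWithinAt w (ball 0 ‖z₀‖) z :=
      (hw.differentiableAt (isOpen_ball.mem_nhds (by simp [hzz, hz1]))).continuousAt.continuousWithinAt
    have := hcw.norm
    have hne : (𝓝[ball 0 ‖z₀‖] z).NeBot := mem_closure_iff_nhdsWithin_neBot.1 hzb
    refine le_of_tendsto this ?_
    filter_upwards [self_mem_nhdsWithin] with y hy
    exact (hlt y (by simpa using hy)).le
  have h1 : ‖w z₀‖ = 1 := le_antisymm (hle z₀ rfl) h1'
  have hn : normSq (w z₀) = 1 := by rw [normSq_eq_norm_sq, h1]; norm_num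
  have him : κ.im = 0 := by
    have h := hasDerivAt_normSq_comp (w := w) (w' := deriv w z₀) (γ := fun s : ℝ => z₀ * exp (s * I)) (t := 0)
      (by simpa using hd) (hasDerivAt_mul_exp_I z₀ 0)
    have hmax : IsLocalMax (fun s : ℝ => normSq (w (z₀ * exp (s * I)))) 0 := by
      refine Eventually.of_forall fun s => ?_
      have := hle (z₀ * exp (s * I)) (by simp [norm_exp_ofReal_mul_I])
      simp only [ofReal_zero, zero_mul, Complex.exp_zero, mul_one, hn]
      rw [normSq_eq_norm_sq]
      exact pow_le_one₀ (norm_nonneg _) this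
    have := hmax.hasDerivAt_eq_zero h
    simp only [ofReal_zero, zero_mul, Complex.exp_zero, mul_one] at this
    have h2 : (starRingEnd ℂ) (w z₀) * (deriv w z₀ * (z₀ * I)) = κ * I := by rw [hκ]; ring
    rw [h2] at this
    simpa using this
  have hre : 1 ≤ κ.re := by
    have h := (hasDerivAt_normSq_comp (w := w) (w' := deriv w z₀) (γ := fun s : ℝ => (s : ℂ) * z₀) (t := 1)
      (by simpa using hd) (hasDerivAt_ofReal_mul z₀ 1)).sub ((hasDerivAt_id (1 : ℝ)).pow 2)
    have := deriv_nonneg_of_eventually_le_left h ?_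
    · simp only [ofReal_one, one_mul, id] at this
      rw [← hκ] at this
      norm_num at this
      linarith
    · have : ∀ᶠ t : ℝ in 𝓝[<] 1, t ∈ Ioo (0 : ℝ) 1 := Ioo_mem_nhdsLT one_pos
      filter_upwards [this] with t ht
      have hs : ‖w (t * z₀)‖ ≤ t := by
        have := dist_le_div_mul_dist_of_mapsTo_ball (f := w) (c := 0) (z := t * z₀)
          (R₁ := ‖z₀‖) (R₂ := 1) (hw.mono hsub)
          (by intro z hz; simp only [mem_closedBall, h0, dist_zero_right]
              exact (hlt z (by simpa using hz)).le)
          (by simp [abs_of_pos ht.1]; nlinarith [ht.1, ht.2, norm_pos_iff.2 hz₀])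
        simp only [h0, dist_zero_right, norm_mul, norm_real, Real.norm_eq_abs, abs_of_pos ht.1] at this
        have hp := norm_pos_iff.2 hz₀
        field_simp at this
        exact this
      simp only [Pi.sub_apply, Pi.pow_apply, id, ofReal_one, one_mul, hn]
      rw [normSq_eq_norm_sq]
      have := pow_le_pow_left₀ (norm_nonneg _) hs 2
      simp; linarith
  refine ⟨h1, κ.re, hre, ?_⟩
  have hk : κ = (κ.re : ℂ) := by apply Complex.ext <;> simp [him]
  rw [← hk, hκ]
  have : (starRingEnd ℂ) (w z₀) * w z₀ = 1 := by
    rw [mul_comm, mul_conj, hn]; simp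
  linear_combination (-(z₀ * deriv w z₀)) * this

theorem norm_lt_one_of_forall_mul_deriv_ne {w : ℂ → ℂ} (hw : DifferentiableOn ℂ w (ball 0 1))
    (h0 : w 0 = 0)
    (h : ∀ z ∈ ball (0 : ℂ) 1, ‖w z‖ = 1 → ∀ k : ℝ, 1 ≤ k → z * deriv w z ≠ k * w z) :
    ∀ z ∈ ball (0 : ℂ) 1, ‖w z‖ < 1 := by
  intro z₁ hz₁
  by_contra! hge
  have hz₁' : ‖z₁‖ < 1 := by simpa using hz₁
  have hsub : closedBall (0 : ℂ) ‖z₁‖ ⊆ ball 0 1 := closedBall_subset_ball hz₁'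
  have hcl : IsClosed (closedBall (0 : ℂ) ‖z₁‖ ∩ (fun z => ‖w z‖) ⁻¹' Ici 1) :=
    ((hw.continuousOn.mono hsub).norm).preimage_isClosed_of_isClosed isClosed_closedBall
      isClosed_Ici
  have hcomp : IsCompact (closedBall (0 : ℂ) ‖z₁‖ ∩ (fun z => ‖w z‖) ⁻¹' Ici 1) :=
    (isCompact_closedBall _ _).of_isClosed_subset hcl inter_subset_left
  obtain ⟨z₀, ⟨hz₀, hw₀⟩, hmin⟩ := hcomp.exists_isMinOn ⟨z₁, by simp, hge⟩
    continuous_norm.continuousOn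
  have hlt : ∀ z, ‖z‖ < ‖z₀‖ → ‖w z‖ < 1 := by
    intro z hz
    by_contra! hcon
    have hz₀' : ‖z₀‖ ≤ ‖z₁‖ := by simpa using hz₀
    have : ‖z₀‖ ≤ ‖z‖ := hmin (show z ∈ _ from ⟨by simpa using hz.le.trans hz₀', hcon⟩)
    linarith
  obtain ⟨h1, k, hk, hkk⟩ := jack hw h0 (hsub hz₀) hw₀ hlt
  exact h z₀ (hsub hz₀) h1 k hk hkk

theorem re_inv_one_sub_eq_half {w : ℂ} (hw : ‖w‖ = 1) (h1 : w ≠ 1) :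
    (w / (1 - w)).re = -(1 / 2) := by
  have h : normSq w = 1 := by rw [normSq_eq_norm_sq, hw]; norm_num
  rw [normSq_apply] at h
  have hne : normSq (1 - w) ≠ 0 := by
    rw [Ne, normSq_eq_zero, sub_eq_zero]; exact fun h => h1 h.symm
  rw [div_re, ← add_div, div_eq_iff hne, normSq_apply]
  simp
  linarith

theorem inv_one_add_le_re_inv_one_sub {w : ℂ} {r : ℝ} (hw : ‖w‖ ≤ r) (hr : r < 1) :
    1 / (1 + r) ≤ ((1 - w)⁻¹).re := by
  have h0 := norm_nonneg w
  have hre : |w.re| ≤ ‖w‖ := abs_re_le_norm w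
  have h2 : normSq w ≤ r ^ 2 := by
    rw [normSq_eq_norm_sq]; exact pow_le_pow_left₀ h0 hw 2
  rw [normSq_apply] at h2
  have hle := abs_le.1 hre
  have hpos : 0 < normSq (1 - w) := by
    rw [normSq_pos, Ne, sub_eq_zero]; rintro rfl; simp at hw; linarith
  rw [inv_re, div_le_div_iff₀ (by linarith) hpos, normSq_apply]
  simp
  nlinarith

/-- The logarithm of the derivative of a convex function of order `3/5`, and its subordination to
`-(4/5) log (1 - z)`. -/
theorem exists_log_deriv {f : ℂ → ℂ} (hd : DifferentiableOn ℂ f (ball 0 1))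
    (h1 : deriv f 0 = 1)
    (h : ∀ z ∈ ball (0 : ℂ) 1, deriv f z ≠ 0 ∧
      3 / 5 < (1 + z * deriv (deriv f) z / deriv f z).re) :
    ∃ L : ℂ → ℂ, (∀ z ∈ ball (0 : ℂ) 1, HasDerivAt L (deriv (deriv f) z / deriv f z) z) ∧
      (∀ z ∈ ball (0 : ℂ) 1, deriv f z = exp (L z)) ∧
      ∀ z ∈ ball (0 : ℂ) 1, ∃ Q : ℂ, 1 / (1 + ‖z‖) ≤ Q.re ∧ L z = 4 / 5 * log Q := by
  have hdf : DifferentiableOn ℂ (deriv f) (ball 0 1) := hd.deriv isOpen_ball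
  have hddf : DifferentiableOn ℂ (deriv (deriv f)) (ball 0 1) := hdf.deriv isOpen_ball
  have h0mem : (0 : ℂ) ∈ ball (0 : ℂ) 1 := by simp
  obtain ⟨L, hL0, hL⟩ := (hddf.div hdf (fun z hz => (h z hz).1)).isExactOn_ball.with_val_at 0 0
  simp only [Pi.div_apply] at hL
  have hdfz : ∀ z ∈ ball (0 : ℂ) 1, HasDerivAt (deriv f) (deriv (deriv f) z) z := fun z hz =>
    (hdf.differentiableAt (isOpen_ball.mem_nhds hz)).hasDerivAt
  have hpre : IsPreconnected (ball (0 : ℂ) 1) := (convex_ball _ _).isPreconnected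
  have hexp : ∀ z ∈ ball (0 : ℂ) 1, deriv f z = exp (L z) := by
    intro z hz
    have hder : ∀ y ∈ ball (0 : ℂ) 1, HasDerivAt (fun y => deriv f y * exp (-L y)) 0 y := by
      intro y hy
      have := (hdfz y hy).mul ((hL y hy).neg.cexp)
      refine this.congr_deriv ?_
      have := (h y hy).1
      field_simp
      simp
    have := isOpen_ball.is_const_of_deriv_eq_zero hpre
      (fun y hy => (hder y hy).differentiableAt.differentiableWithinAt)
      (fun y hy => (hder y hy).deriv) hz h0mem
    simp only [hL0, h1, neg_zero, Complex.exp_zero, mul_one] at this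
    rw [Complex.exp_neg, mul_inv_eq_one₀ (Complex.exp_ne_zero _)] at this
    exact this
  refine ⟨L, hL, hexp, ?_⟩
  set w : ℂ → ℂ := fun z => 1 - exp (-(5 / 4 * L z)) with hwdef
  have hw' : ∀ z ∈ ball (0 : ℂ) 1,
      HasDerivAt w (5 / 4 * (deriv (deriv f) z / deriv f z) * (1 - w z)) z := by
    intro z hz
    have := (((hL z hz).const_mul (5 / 4)).neg.cexp).const_sub 1
    refine this.congr_deriv ?_
    simp [hwdef]; ring
  have hwd : DifferentiableOn ℂ w (ball 0 1) := fun z hz =>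
    (hw' z hz).differentiableAt.differentiableWithinAt
  have hw0 : w 0 = 0 := by simp [hwdef, hL0]
  have hwlt := norm_lt_one_of_forall_mul_deriv_ne hwd hw0 (by
    intro z hz hn k hk heq
    rw [(hw' z hz).deriv] at heq
    have hne : w z ≠ 1 := by simp [hwdef, Complex.exp_ne_zero]
    have hne' : (1 : ℂ) - w z ≠ 0 := sub_ne_zero.2 hne.symm
    have h2 := (h z hz).2
    have h3 : z * deriv (deriv f) z / deriv f z = ((4 / 5 * k : ℝ) : ℂ) * (w z / (1 - w z)) := by
      push_cast
      rw [mul_div_assoc', eq_div_iff hne']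
      linear_combination (4 / 5) * heq
    rw [h3, add_re, re_ofReal_mul, re_inv_one_sub_eq_half hn hne] at h2
    simp at h2
    linarith)
  have hle : ∀ z ∈ ball (0 : ℂ) 1, ‖w z‖ ≤ ‖z‖ := fun z hz =>
    norm_le_norm_of_mapsTo_ball hwd (fun y hy => by simpa using (hwlt y hy).le) hw0 (by simpa using hz)
  have hQ : ∀ z ∈ ball (0 : ℂ) 1, 1 / (1 + ‖z‖) ≤ (exp (5 / 4 * L z)).re := by
    intro z hz
    have := inv_one_add_le_re_inv_one_sub (hle z hz) (by simpa using hz)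
    simpa [hwdef, Complex.exp_neg] using this
  refine fun z hz => ⟨exp (5 / 4 * L z), hQ z hz, ?_⟩
  have hder : ∀ y ∈ ball (0 : ℂ) 1,
      HasDerivAt (fun y => L y - 4 / 5 * log (exp (5 / 4 * L y))) 0 y := by
    intro y hy
    have hsl : exp (5 / 4 * L y) ∈ slitPlane :=
      Or.inl (lt_of_lt_of_le (by positivity) (hQ y hy))
    have := (hL y hy).sub ((((hL y hy).const_mul (5 / 4)).cexp.clog hsl).const_mul (4 / 5))
    refine this.congr_deriv ?_
    have := Complex.exp_ne_zero (5 / 4 * L y)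
    field_simp
    ring
  have := isOpen_ball.is_const_of_deriv_eq_zero hpre
    (fun y hy => (hder y hy).differentiableAt.differentiableWithinAt)
    (fun y hy => (hder y hy).deriv) hz h0mem
  simp only [hL0, mul_zero, Complex.exp_zero, log_one, sub_zero] at this
  exact sub_eq_zero.1 this

theorem rpow_re_le_re_exp_log {Q : ℂ} (hQ : 0 < Q.re) :
    Q.re ^ (4 / 5 : ℝ) ≤ (exp (4 / 5 * log Q)).re := by
  have hQ0 : Q ≠ 0 := by rintro rfl; simp at hQ
  have hn : 0 < ‖Q‖ := norm_pos_iff.2 hQ0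
  have harg : |Q.arg| < Real.pi / 2 := abs_arg_lt_pi_div_two_iff.2 (Or.inl hQ)
  have hcos : 0 < Real.cos Q.arg := Real.cos_pos_of_mem_Ioo (abs_lt.1 harg)
  have hre : Q.re = ‖Q‖ * Real.cos Q.arg := (norm_mul_cos_arg Q).symm
  have hkey : Real.cos Q.arg ^ (4 / 5 : ℝ) ≤ Real.cos (4 / 5 * Q.arg) := by
    have h1 := Real.geom_mean_le_arith_mean2_weighted (w₁ := 1 / 5) (w₂ := 4 / 5) (by norm_num)
      (by norm_num) zero_le_one hcos.le (by norm_num)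
    have h0 : (0 : ℝ) ∈ Icc (-(Real.pi / 2)) (Real.pi / 2) := by
      constructor <;> linarith [Real.pi_pos]
    have h2 := strictConcaveOn_cos_Icc.concaveOn.2 h0 ⟨(abs_lt.1 harg).1.le, (abs_lt.1 harg).2.le⟩
      (show (0 : ℝ) ≤ 1 / 5 by norm_num) (show (0 : ℝ) ≤ 4 / 5 by norm_num) (by norm_num)
    simp only [smul_eq_mul, Real.cos_zero, mul_zero, zero_add, Real.one_rpow, one_mul] at h1 h2
    linarith
  have h4 : ((4 : ℂ) / 5 * log Q) = ((4 / 5 * Real.log ‖Q‖ : ℝ) : ℂ) + ((4 / 5 * Q.arg : ℝ) : ℂ) * I := by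
    apply Complex.ext <;> simp [log_re, log_im]
  rw [h4, exp_add, ← ofReal_exp, re_ofReal_mul, exp_ofReal_mul_I_re, hre, Real.mul_rpow hn.le hcos.le,
    Real.rpow_def_of_pos hn, mul_comm (4 / 5 : ℝ) (Real.log _)]
  gcongr

theorem linear_le_rpow {t : ℝ} (h0 : 0 ≤ t) (h1 : t ≤ 1) :
    0.915 - 0.386 * t ≤ (1 / (1 + t)) ^ (4 / 5 : ℝ) := by
  have hb := rpow_one_add_le_one_add_mul_self (s := (t - 1 / 2) / (3 / 2)) (p := 4 / 5)
    (by linarith) (by norm_num) (by norm_num)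
  have hc : (3 / 2 : ℝ) ^ (4 / 5 : ℝ) ≤ 1.3833 := by
    have : (3 / 2 : ℝ) ^ (4 / 5 : ℝ) = ((3 / 2 : ℝ) ^ (4 : ℕ)) ^ (1 / 5 : ℝ) := by
      rw [← Real.rpow_natCast, ← Real.rpow_mul (by norm_num)]; norm_num
    rw [this]
    calc ((3 / 2 : ℝ) ^ (4 : ℕ)) ^ (1 / 5 : ℝ) ≤ ((1.3833 : ℝ) ^ (5 : ℕ)) ^ (1 / 5 : ℝ) := by
          gcongr; norm_num
      _ = 1.3833 := by rw [← Real.rpow_natCast, ← Real.rpow_mul (by norm_num)]; norm_num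
  have hp : (1 + t) ^ (4 / 5 : ℝ) ≤ 1.3833 * (1 + 4 / 5 * ((t - 1 / 2) / (3 / 2))) := by
    have : 1 + t = 3 / 2 * (1 + (t - 1 / 2) / (3 / 2)) := by ring
    rw [this, Real.mul_rpow (by norm_num) (by linarith)]
    have : 0 ≤ 1 + (t - 1 / 2) / (3 / 2) := by linarith
    gcongr
  have hpos : 0 < (1 + t) ^ (4 / 5 : ℝ) := by positivity
  rw [one_div, Real.inv_rpow (by linarith), ← one_div, le_div_iff₀ hpos]
  nlinarith [mul_le_mul_of_nonneg_left hp (show 0 ≤ 0.915 - 0.386 * t by nlinarith),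
    sq_nonneg (t - 1 / 2)]

theorem le_inv_one_add_rpow {t : ℝ} (h0 : 0 ≤ t) (h1 : t ≤ 1) :
    0.57 ≤ (1 / (1 + t)) ^ (4 / 5 : ℝ) := by
  calc (0.57 : ℝ) = ((0.57 : ℝ) ^ (5 : ℕ)) ^ (1 / 5 : ℝ) := by
        rw [← Real.rpow_natCast, ← Real.rpow_mul (by norm_num)]; norm_num
    _ ≤ ((1 / 2 : ℝ) ^ (4 : ℕ)) ^ (1 / 5 : ℝ) := by gcongr; norm_num
    _ = (1 / 2 : ℝ) ^ (4 / 5 : ℝ) := by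
        rw [← Real.rpow_natCast, ← Real.rpow_mul (by norm_num)]; norm_num
    _ ≤ (1 / (1 + t)) ^ (4 / 5 : ℝ) := by gcongr; linarith

theorem eq_mul_integral_deriv {f : ℂ → ℂ} (hd : DifferentiableOn ℂ f (ball 0 1)) (h0 : f 0 = 0)
    {z : ℂ} (hz : z ∈ ball (0 : ℂ) 1) : f z = z * ∫ t in (0 : ℝ)..1, deriv f (t * z) := by
  have hmem : ∀ t ∈ uIcc (0 : ℝ) 1, (t : ℂ) * z ∈ ball (0 : ℂ) 1 := by
    intro t ht
    rw [uIcc_of_le zero_le_one] at ht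
    simp only [mem_ball, dist_zero_right, norm_mul, norm_real, Real.norm_eq_abs,
      abs_of_nonneg ht.1] at hz ⊢
    nlinarith [norm_nonneg z, ht.2]
  have hc : ContinuousOn (fun t : ℝ => deriv f (t * z)) (uIcc 0 1) :=
    (hd.deriv isOpen_ball).continuousOn.comp (by fun_prop) hmem
  have := intervalIntegral.integral_eq_sub_of_hasDerivAt (f := fun t : ℝ => f (t * z))
    (f' := fun t : ℝ => deriv f (t * z) * z) (a := 0) (b := 1)
    (fun t ht => ((hd.differentiableAt (isOpen_ball.mem_nhds (hmem t ht))).hasDerivAt).comp t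
      (hasDerivAt_ofReal_mul z t)) ((hc.mul continuousOn_const).intervalIntegrable)
  rw [intervalIntegral.integral_mul_const] at this
  simp [h0] at this
  rw [← this]; ring

theorem intervalIntegrable_deriv_ray {f : ℂ → ℂ} (hd : DifferentiableOn ℂ f (ball 0 1))
    {z : ℂ} (hz : z ∈ ball (0 : ℂ) 1) :
    IntervalIntegrable (fun t : ℝ => deriv f (t * z)) MeasureTheory.volume 0 1 := by
  refine ContinuousOn.intervalIntegrable ?_
  refine (hd.deriv isOpen_ball).continuousOn.comp (by fun_prop) ?_
  intro t ht
  rw [uIcc_of_le zero_le_one] at ht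
  simp only [mem_ball, dist_zero_right, norm_mul, norm_real, Real.norm_eq_abs,
    abs_of_nonneg ht.1] at hz ⊢
  nlinarith [norm_nonneg z, ht.2]

theorem le_re_div_self {f : ℂ → ℂ} (hd : DifferentiableOn ℂ f (ball 0 1)) (h0 : f 0 = 0)
    (h : ∀ z ∈ ball (0 : ℂ) 1, (1 / (1 + ‖z‖)) ^ (4 / 5 : ℝ) ≤ (deriv f z).re)
    {z : ℂ} (hz : z ∈ ball (0 : ℂ) 1) (hz0 : z ≠ 0) : 0.722 ≤ (f z / z).re := by
  have hint := intervalIntegrable_deriv_ray hd hz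
  rw [eq_mul_integral_deriv hd h0 hz, mul_div_cancel_left₀ _ hz0]
  have hre : (∫ t in (0 : ℝ)..1, deriv f (t * z)).re = ∫ t in (0 : ℝ)..1, (deriv f (t * z)).re :=
    (reCLM.intervalIntegral_comp_comm hint).symm
  have hl : ∫ t in (0 : ℝ)..1, (0.915 - 0.386 * t) = 0.722 := by
    rw [intervalIntegral.integral_sub (by simp) (by
      exact (continuous_const.mul continuous_id).intervalIntegrable _ _)]
    rw [intervalIntegral.integral_const_mul, integral_id]; norm_num
  rw [hre, ← hl]
  refine intervalIntegral.integral_mono_on zero_le_one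
    (Continuous.intervalIntegrable (by fun_prop) _ _)
    (reCLM.integrable_comp hint.1 |> fun h => ⟨h, by simp⟩) ?_
  intro t ht
  refine (linear_le_rpow ht.1 ht.2).trans (le_trans ?_ (h _ ?_))
  · have : ‖(t : ℂ) * z‖ ≤ t := by
      simp only [norm_mul, norm_real, Real.norm_eq_abs, abs_of_nonneg ht.1]
      simp at hz; nlinarith [ht.1]
    have := ht.1
    gcongr
  · simp only [mem_ball, dist_zero_right, norm_mul, norm_real, Real.norm_eq_abs,
      abs_of_nonneg ht.1] at hz ⊢
    nlinarith [norm_nonneg z, ht.2]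

/-- For a convex function `f`, rotating `f z / z` by minus the argument of `f' z` preserves a lower
bound on the real part. -/
theorem le_re_div_mul_exp {f L : ℂ → ℂ} {m : ℝ} (hd : DifferentiableOn ℂ f (ball 0 1))
    (hL : ∀ z ∈ ball (0 : ℂ) 1, HasDerivAt L (deriv (deriv f) z / deriv f z) z)
    (hexp : ∀ z ∈ ball (0 : ℂ) 1, deriv f z = exp (L z))
    (hconv : ∀ z ∈ ball (0 : ℂ) 1, 0 < (1 + z * deriv (deriv f) z / deriv f z).re)
    (him : ∀ z ∈ ball (0 : ℂ) 1, |(L z).im| < Real.pi)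
    (hm : ∀ z ∈ ball (0 : ℂ) 1, z ≠ 0 → m ≤ (f z / z).re)
    {z : ℂ} (hz : z ∈ ball (0 : ℂ) 1) (hz0 : z ≠ 0) :
    m ≤ (f z / z * exp (-((L z).im * I))).re := by
  set ψ : ℝ := (L z).im with hψ
  set γ : ℝ → ℂ := fun θ => z * exp (θ * I) with hγ
  have hmem : ∀ θ, γ θ ∈ ball (0 : ℂ) 1 := fun θ => by
    simpa [hγ, norm_exp_ofReal_mul_I] using hz
  have hγ' : ∀ θ, HasDerivAt γ (γ θ * I) θ := fun θ => hasDerivAt_mul_exp_I z θ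
  set n : ℝ → ℝ := fun θ => θ + (L (γ θ)).im - ψ with hn
  have hn' : ∀ θ, HasDerivAt n (1 + γ θ * deriv (deriv f) (γ θ) / deriv f (γ θ)).re θ := by
    intro θ
    have h1 := hasDerivAt_im ((hL _ (hmem θ)).comp θ (hγ' θ))
    refine (((hasDerivAt_id θ).add h1).sub_const ψ).congr_deriv ?_
    have : deriv (deriv f) (γ θ) / deriv f (γ θ) * (γ θ * I) =
      (γ θ * deriv (deriv f) (γ θ) / deriv f (γ θ)) * I := by ring
    rw [this]; simp
  have hmono : StrictMono n := strictMono_of_deriv_pos fun θ => by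
    rw [(hn' θ).deriv]; exact hconv _ (hmem θ)
  have hn0 : n 0 = 0 := by simp [hn, hγ, hψ]
  have hnψ : |n ψ| < Real.pi := by
    have : n ψ = (L (γ ψ)).im := by simp [hn]
    rw [this]; exact him _ (hmem ψ)
  set φ : ℝ → ℝ := fun θ => (f (γ θ) * ((starRingEnd ℂ) z * exp (-(ψ * I)))).re with hφ
  have hφ' : ∀ θ, HasDerivAt φ (-(normSq z * Real.exp (L (γ θ)).re * Real.sin (n θ))) θ := by
    intro θ
    have h1 := ((hd.differentiableAt (isOpen_ball.mem_nhds (hmem θ))).hasDerivAt.comp θ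
      (hγ' θ)).mul_const ((starRingEnd ℂ) z * exp (-(ψ * I)))
    refine (hasDerivAt_re h1).congr_deriv ?_
    have h2 : deriv f (γ θ) * (γ θ * I) * ((starRingEnd ℂ) z * exp (-(ψ * I))) =
        ((normSq z * Real.exp (L (γ θ)).re : ℝ) : ℂ) * (exp ((n θ : ℝ) * I) * I) := by
      have h3 : exp (L (γ θ)) = (Real.exp (L (γ θ)).re : ℂ) * exp ((L (γ θ)).im * I) := by
        rw [ofReal_exp, ← exp_add, re_add_im]
      have h4 : exp ((n θ : ℝ) * I) = exp ((L (γ θ)).im * I) * exp (θ * I) * exp (-(ψ * I)) := by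
        rw [← exp_add, ← exp_add]; simp only [hn]; push_cast; ring_nf
      rw [hexp _ (hmem θ), h3, h4, ofReal_mul, ← mul_conj]
      simp only [hγ]
      ring
    rw [h2, re_ofReal_mul]
    simp
  have hle : φ ψ ≤ φ 0 := by
    have hdiff : Differentiable ℝ φ := fun θ => (hφ' θ).differentiableAt
    have hab := abs_lt.1 hnψ
    have hpos : ∀ θ, 0 ≤ normSq z * Real.exp (L (γ θ)).re := fun θ =>
      mul_nonneg (normSq_nonneg _) (Real.exp_nonneg _)
    rcases le_total 0 ψ with h | h
    · refine antitoneOn_of_deriv_nonpos (convex_Icc 0 ψ) hdiff.continuous.continuousOn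
        hdiff.differentiableOn ?_ ⟨le_rfl, h⟩ ⟨h, le_rfl⟩ h
      intro θ hθ
      rw [interior_Icc] at hθ
      rw [(hφ' θ).deriv, neg_nonpos]
      refine mul_nonneg (hpos θ) (Real.sin_nonneg_of_nonneg_of_le_pi ?_ ?_)
      · rw [← hn0]; exact hmono.monotone hθ.1.le
      · exact (hmono.monotone hθ.2.le).trans hab.2.le
    · refine monotoneOn_of_deriv_nonneg (convex_Icc ψ 0) hdiff.continuous.continuousOn
        hdiff.differentiableOn ?_ ⟨le_rfl, h⟩ ⟨h, le_rfl⟩ h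
      intro θ hθ
      rw [interior_Icc] at hθ
      rw [(hφ' θ).deriv, neg_nonneg]
      refine mul_nonpos_of_nonneg_of_nonpos (hpos θ) (Real.sin_nonpos_of_nonpos_of_neg_pi_le ?_ ?_)
      · rw [← hn0]; exact hmono.monotone hθ.2.le
      · exact hab.1.le.trans (hmono.monotone hθ.1.le)
  have hN : 0 < normSq z := normSq_pos.2 hz0
  have hcz : (starRingEnd ℂ) z = (normSq z : ℂ) / z := by
    rw [← mul_conj]; field_simp
  have hφ0 : φ 0 = normSq z * (f z / z * exp (-(ψ * I))).re := by
    rw [← re_ofReal_mul]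
    simp only [hφ, hγ, ofReal_zero, zero_mul, Complex.exp_zero, mul_one, hcz]
    congr 1; ring
  have hφψ : φ ψ = normSq z * (f (γ ψ) / γ ψ).re := by
    rw [← re_ofReal_mul]
    simp only [hφ, hγ, hcz, Complex.exp_neg]
    congr 1
    have := Complex.exp_ne_zero (ψ * I)
    field_simp
  rw [hφ0, hφψ] at hle
  have := le_of_mul_le_mul_left hle hN
  exact (hm _ (hmem ψ) (mul_ne_zero hz0 (Complex.exp_ne_zero _))).trans this

theorem polynomial_bound {ρ c s l : ℝ} (hρ : 0 < ρ) (hc : 0 ≤ c) (hc1 : c ≤ 0.5408)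
    (hs : 0.84 ≤ s) (hs1 : s ≤ 1) (hl : l ≤ 0.4712) (hcoef : ρ * (1.031 - 0.3 * l) ≤ 1)
    (hq : 1.5708 * (1 - 0.3 * ρ * 0.84) + l * (ρ * 0.84 + 0.3) - 0.88 * (1 + ρ ^ 2) ≤ 0) :
    (1.5708 - c) * (1 - ρ * c - 0.3 * ρ * s) + l * (ρ * s + 0.3 * (1 - ρ * c))
      ≤ 0.88 * (1 - 2 * ρ * c + ρ ^ 2) := by
  have h1 : ρ * (l - 1.5708 * 0.3) * (s - 0.84) ≤ 0 :=
    mul_nonpos_of_nonpos_of_nonneg (mul_nonpos_of_nonneg_of_nonpos hρ.le (by linarith))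
      (by linarith)
  have h2 : c * (c * ρ - 1.5708 * ρ - 1 + 0.3 * ρ * s - 0.3 * ρ * l + 1.76 * ρ) ≤ 0 := by
    refine mul_nonpos_of_nonneg_of_nonpos hc ?_
    nlinarith [mul_le_mul_of_nonneg_left hc1 hρ.le, mul_le_mul_of_nonneg_left hs1 hρ.le]
  linarith

theorem log_le_of_two_mul (ρ : ℝ) (hρ : 0 < ρ) : Real.log ρ ≤ 2 * ρ - 1.6931 := by
  have h := Real.log_le_sub_one_of_pos (show 0 < 2 * ρ by linarith)
  rw [Real.log_mul (by norm_num) hρ.ne'] at h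
  linarith [Real.log_two_gt_d9]

theorem log_le_of_four_mul (ρ : ℝ) (hρ : 0 < ρ) : Real.log ρ ≤ 4 * ρ - 2.386 := by
  have h := Real.log_le_sub_one_of_pos (show 0 < 2 * (2 * ρ) by linarith)
  rw [Real.log_mul (by norm_num) (by positivity), Real.log_mul (by norm_num) hρ.ne'] at h
  linarith [Real.log_two_gt_d9]

/-- Upper bound for the imaginary part of `-log (1 - x) / x` in polar coordinates
`1 - x = ρ * exp (± χ * I)`. -/
theorem polar_bound {ρ χ : ℝ} (hρ : 0 < ρ) (hχ : 0 ≤ χ) (hχ1 : χ < Real.pi / 2)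
    (hD : ρ ≤ 2 * Real.cos χ)
    (hM : (1 - 2 * ρ * Real.cos χ + ρ ^ 2) / 2
      ≤ -Real.log ρ * (1 - ρ * Real.cos χ) + χ * ρ * Real.sin χ) :
    |χ * (1 - ρ * Real.cos χ) + ρ * Real.sin χ * Real.log ρ| ≤
      0.88 * (1 - 2 * ρ * Real.cos χ + ρ ^ 2) +
        0.3 * (-Real.log ρ * (1 - ρ * Real.cos χ) + χ * ρ * Real.sin χ) := by
  have hc : 0 < Real.cos χ := Real.cos_pos_of_mem_Ioo ⟨by linarith [Real.pi_pos], hχ1⟩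
  have hs : 0 ≤ Real.sin χ := Real.sin_nonneg_of_nonneg_of_le_pi hχ (by linarith [Real.pi_pos])
  have hsc : χ * Real.cos χ ≤ Real.sin χ := by
    have := Real.le_tan hχ hχ1
    rwa [Real.tan_eq_sin_div_cos, le_div_iff₀ hc] at this
  have hsx : Real.sin χ ≤ χ := Real.sin_le hχ
  have hcs := Real.sin_sq_add_cos_sq χ
  have hcx : Real.cos χ ≤ Real.pi / 2 - χ := by
    rw [← Real.sin_pi_div_two_sub]; exact Real.sin_le (by linarith)
  set c := Real.cos χ
  set s := Real.sin χ
  have hN : 0 ≤ χ * (1 - ρ * c) + ρ * s * Real.log ρ := by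
    have h := Real.one_sub_inv_le_log_of_pos hρ
    have h2 : ρ - 1 ≤ ρ * Real.log ρ := by
      have := mul_le_mul_of_nonneg_left h hρ.le
      rwa [mul_sub, mul_inv_cancel₀ hρ.ne', mul_one] at this
    linarith [mul_le_mul_of_nonneg_left h2 hs, mul_le_mul_of_nonneg_left hsc hρ.le]
  rw [abs_of_nonneg hN]
  have hs1 : s ≤ 1 := Real.sin_le_one χ
  have hpi : Real.pi / 2 ≤ 1.5708 := by linarith [Real.pi_lt_d4]
  rcases le_or_gt χ 1.03 with hle | hgt
  · have hND : χ * (1 - ρ * c) + ρ * s * Real.log ρ ≤ χ * (1 - 2 * ρ * c + ρ ^ 2) := by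
      have h : s * Real.log ρ ≤ χ * (ρ - c) := by
        rcases hs.eq_or_lt with h0 | h0
        · rw [← h0] at hsc ⊢
          have : χ = 0 := le_antisymm (by nlinarith) hχ
          simp [this]
        · have hχ0 : 0 < χ := h0.trans_le hsx
          have h1 := Real.log_le_sub_one_of_pos (show 0 < ρ * (χ / s) by positivity)
          rw [Real.log_mul hρ.ne' (by positivity)] at h1
          have h2 : 0 ≤ Real.log (χ / s) := Real.log_nonneg (by rwa [one_le_div h0])
          have h3 : s * Real.log ρ ≤ s * (ρ * (χ / s) - 1) :=
            mul_le_mul_of_nonneg_left (by linarith) hs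
          have h4 : s * (ρ * (χ / s) - 1) = ρ * χ - s := by field_simp
          linarith
      linarith [mul_le_mul_of_nonneg_left h hρ.le]
    have hDn : 0 ≤ 1 - 2 * ρ * c + ρ ^ 2 := by linarith [sq_nonneg (ρ - c), sq_nonneg s]
    linarith [mul_le_mul_of_nonneg_right hle hDn]
  · have hc1 : c ≤ 0.5408 := by linarith
    have hρ1 : ρ ≤ 1.0816 := by linarith
    have hs84 : 0.84 ≤ s := by
      have := pow_le_pow_left₀ hc.le hc1 2
      exact le_of_sq_le_sq (by linarith) hs
    have hρc : ρ * c ≤ 1.0816 * 0.5408 := by gcongr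
    have hρs : ρ * s ≤ 1.0816 * 1 := by gcongr
    have hp1 : 0 ≤ 1 - ρ * c - 0.3 * ρ * s := by linarith
    have hp2 : 0 ≤ ρ * s + 0.3 * (1 - ρ * c) := by linarith [mul_nonneg hρ.le hs]
    have e1 := mul_le_mul_of_nonneg_right (show χ ≤ 1.5708 - c by linarith) hp1
    suffices ∃ l, Real.log ρ ≤ l ∧ l ≤ 0.4712 ∧ ρ * (1.031 - 0.3 * l) ≤ 1 ∧
        1.5708 * (1 - 0.3 * ρ * 0.84) + l * (ρ * 0.84 + 0.3) - 0.88 * (1 + ρ ^ 2) ≤ 0 by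
      obtain ⟨l, hl, hl1, hl2, hl3⟩ := this
      have e2 := mul_le_mul_of_nonneg_right hl hp2
      have e3 := polynomial_bound hρ hc.le hc1 hs84 hs1 hl1 hl2 hl3
      linarith
    rcases le_or_gt ρ 0.3 with h3 | h3
    · refine ⟨_, log_le_of_four_mul ρ hρ, by linarith,
        by linarith [sq_nonneg ρ],
        by linarith [mul_nonneg hρ.le (sub_nonneg.2 h3)]⟩
    · refine ⟨_, log_le_of_two_mul ρ hρ, by linarith,
        by linarith [sq_nonneg (ρ - 1.2824)],
        by linarith [mul_nonneg (sub_nonneg.2 h3.le) (sub_nonneg.2 hρ1)]⟩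

/-- The function `-log (1 - x) / x`, as an integral. -/
noncomputable def logKernel (x : ℂ) : ℂ := ∫ t in (0 : ℝ)..1, (1 - t * x)⁻¹

theorem one_sub_ofReal_mul_mem_slitPlane {x : ℂ} (hx : ‖x‖ < 1) {t : ℝ} (ht : t ∈ Icc (0 : ℝ) 1) :
    1 - (t : ℂ) * x ∈ slitPlane := by
  have h : ‖(t : ℂ) * x‖ < 1 := by
    simp only [norm_mul, norm_real, Real.norm_eq_abs, abs_of_nonneg ht.1]
    nlinarith [norm_nonneg x, ht.2]
  exact Or.inl (by simpa using (re_le_norm ((t : ℂ) * x)).trans_lt h)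

theorem intervalIntegrable_inv_one_sub {x : ℂ} (hx : ‖x‖ < 1) :
    IntervalIntegrable (fun t : ℝ => (1 - (t : ℂ) * x)⁻¹) MeasureTheory.volume 0 1 := by
  refine ContinuousOn.intervalIntegrable (ContinuousOn.inv₀ (by fun_prop) fun t ht => ?_)
  rw [uIcc_of_le zero_le_one] at ht
  exact slitPlane_ne_zero (one_sub_ofReal_mul_mem_slitPlane hx ht)

theorem mul_logKernel {x : ℂ} (hx : ‖x‖ < 1) : x * logKernel x = -log (1 - x) := by
  have := intervalIntegral.integral_eq_sub_of_hasDerivAt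
    (f := fun t : ℝ => -log (1 - (t : ℂ) * x)) (f' := fun t : ℝ => x * (1 - (t : ℂ) * x)⁻¹)
    (a := 0) (b := 1) (fun t ht => by
      rw [uIcc_of_le zero_le_one] at ht
      have := (((hasDerivAt_ofReal_mul x t).const_sub 1).clog_real
        (one_sub_ofReal_mul_mem_slitPlane hx ht)).neg
      refine this.congr_deriv ?_
      rw [neg_div, neg_neg, div_eq_mul_inv]) ((intervalIntegrable_inv_one_sub hx).const_mul x)
  rw [intervalIntegral.integral_const_mul] at this
  simpa [logKernel] using this

theorem half_le_re_logKernel {x : ℂ} (hx : ‖x‖ < 1) : 1 / 2 ≤ (logKernel x).re := by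
  have hint := intervalIntegrable_inv_one_sub hx
  have hre : (logKernel x).re = ∫ t in (0 : ℝ)..1, ((1 - (t : ℂ) * x)⁻¹).re :=
    (reCLM.intervalIntegral_comp_comm hint).symm
  have hl : ∫ _t in (0 : ℝ)..1, (1 / 2 : ℝ) = 1 / 2 := by simp
  rw [hre, ← hl]
  refine intervalIntegral.integral_mono_on zero_le_one (by simp)
    ⟨reCLM.integrable_comp hint.1, by simp⟩ fun t ht => ?_
  have h : ‖(t : ℂ) * x‖ < 1 := by
    simp only [norm_mul, norm_real, Real.norm_eq_abs, abs_of_nonneg ht.1]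
    nlinarith [norm_nonneg x, ht.2]
  refine le_trans ?_ (inv_one_add_le_re_inv_one_sub le_rfl h)
  gcongr
  linarith

theorem abs_im_logKernel_le {x : ℂ} (hx : ‖x‖ < 1) :
    |(logKernel x).im| ≤ 0.88 + 0.3 * (logKernel x).re := by
  rcases eq_or_ne x 0 with rfl | hx0
  · simp [logKernel]; norm_num
  have hhalf := half_le_re_logKernel hx
  have hmul := mul_logKernel hx
  set k := logKernel x
  set y := 1 - x with hy
  have hyre : 0 < y.re := by simpa [hy] using (re_le_norm x).trans_lt hx
  have hy0 : y ≠ 0 := by rintro h; simp [h] at hyre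
  have hρ : 0 < ‖y‖ := norm_pos_iff.2 hy0
  have harg : |y.arg| < Real.pi / 2 := abs_arg_lt_pi_div_two_iff.2 (Or.inl hyre)
  have hN : 0 < normSq x := normSq_pos.2 hx0
  have hN1 : normSq x < 1 := by
    rw [normSq_eq_norm_sq]; exact pow_lt_one₀ (norm_nonneg _) hx two_ne_zero
  have hxre : x.re = 1 - ‖y‖ * Real.cos y.arg := by rw [norm_mul_cos_arg]; simp [hy]
  have hxim : x.im = -(‖y‖ * Real.sin y.arg) := by rw [norm_mul_sin_arg]; simp [hy]
  have hD : normSq x = 1 - 2 * ‖y‖ * Real.cos y.arg + ‖y‖ ^ 2 := by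
    rw [normSq_apply, hxre, hxim]
    linear_combination ‖y‖ ^ 2 * Real.sin_sq_add_cos_sq y.arg
  have hk : (normSq x : ℂ) * k = -log y * (starRingEnd ℂ) x := by
    rw [← hmul, ← mul_conj]; ring
  have hkre : normSq x * k.re =
      -Real.log ‖y‖ * (1 - ‖y‖ * Real.cos y.arg) + y.arg * ‖y‖ * Real.sin y.arg := by
    have := congrArg re hk
    rw [re_ofReal_mul] at this
    rw [this]
    simp only [mul_re, neg_re, neg_im, conj_re, conj_im, log_re, log_im, hxre, hxim]; ring
  have hkim : normSq x * k.im =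
      -(y.arg * (1 - ‖y‖ * Real.cos y.arg) + ‖y‖ * Real.sin y.arg * Real.log ‖y‖) := by
    have := congrArg im hk
    rw [im_ofReal_mul] at this
    rw [this]
    simp only [mul_im, neg_re, neg_im, conj_re, conj_im, log_re, log_im, hxre, hxim]; ring
  have habs : |y.arg| * ‖y‖ * Real.sin |y.arg| = y.arg * ‖y‖ * Real.sin y.arg := by
    rcases abs_cases y.arg with ⟨h, -⟩ | ⟨h, -⟩ <;> simp [h]
  have habs2 : |(|y.arg| * (1 - ‖y‖ * Real.cos y.arg) + ‖y‖ * Real.sin |y.arg| * Real.log ‖y‖)| =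
      |y.arg * (1 - ‖y‖ * Real.cos y.arg) + ‖y‖ * Real.sin y.arg * Real.log ‖y‖| := by
    rcases abs_cases y.arg with ⟨h, -⟩ | ⟨h, -⟩ <;> rw [h]
    rw [← abs_neg]; congr 1; simp; ring
  have key := polar_bound (χ := |y.arg|) hρ (abs_nonneg _) harg
    (by rw [Real.cos_abs]; rw [hD] at hN1; nlinarith)
    (by rw [Real.cos_abs, habs, ← hkre, ← hD]; nlinarith)
  rw [Real.cos_abs, habs, ← hkre, ← hD, habs2, ← abs_neg, ← hkim, abs_mul, abs_of_pos hN] at key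
  have : normSq x * |k.im| ≤ normSq x * (0.88 + 0.3 * k.re) := by linarith
  exact le_of_mul_le_mul_left this hN

theorem cos_two_pi_div_five_gt : 0.309 < Real.cos (2 * Real.pi / 5) := by
  have h : Real.cos (2 * Real.pi / 5) = 2 * Real.cos (Real.pi / 5) ^ 2 - 1 := by
    rw [← Real.cos_two_mul]; ring_nf
  have h5 : (2.2360 : ℝ) < √5 := by
    rw [Real.lt_sqrt (by norm_num)]; norm_num
  rw [h, Real.cos_pi_div_five]
  nlinarith [Real.sq_sqrt (show (0 : ℝ) ≤ 5 by norm_num)]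

theorem cos_gt_of_abs_le {ν : ℝ} (hν : |ν| ≤ 2 * Real.pi / 5) : 0.309 < Real.cos ν := by
  rw [← Real.cos_abs]
  refine cos_two_pi_div_five_gt.trans_le ?_
  exact Real.cos_le_cos_of_nonneg_of_le_pi (abs_nonneg _) (by linarith [Real.pi_pos]) hν

theorem neg_le_re_exp_mul_logKernel {x : ℂ} (hx : ‖x‖ < 1) {ν : ℝ} (hν : |ν| ≤ 2 * Real.pi / 5) :
    -0.88 ≤ (exp (ν * I) * logKernel x).re := by
  have h1 := abs_im_logKernel_le hx
  have h2 := half_le_re_logKernel hx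
  have h3 := cos_gt_of_abs_le hν
  have h4 := Real.abs_sin_le_one ν
  rw [mul_re, exp_ofReal_mul_I_re, exp_ofReal_mul_I_im]
  have h5 : Real.sin ν * (logKernel x).im ≤ 1 * (0.88 + 0.3 * (logKernel x).re) := by
    calc _ ≤ |Real.sin ν * (logKernel x).im| := le_abs_self _
      _ = |Real.sin ν| * |(logKernel x).im| := abs_mul _ _
      _ ≤ _ := by gcongr
  nlinarith

/-- A Cauchy integral formula in terms of the real part of a holomorphic function. -/
theorem circleAverage_re_mul_re {v : ℂ → ℂ} (hv : DifferentiableOn ℂ v (ball 0 1)) {R : ℝ}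
    (hR0 : 0 < R) (hR1 : R < 1) {w : ℂ} (hw : ‖w‖ < R) (a : ℂ) :
    Real.circleAverage (fun ζ => (v ζ).re * (2 * (a * (1 - w / ζ)⁻¹).re)) 0 R =
      (a * v w + (starRingEnd ℂ) a * v 0).re := by
  have habs : |R| = R := abs_of_pos hR0
  have hsub : closedBall (0 : ℂ) R ⊆ ball 0 1 := closedBall_subset_ball hR1
  have hd : DiffContOnCl ℂ v (ball 0 |R|) := by
    rw [habs]; exact (hv.mono (by rwa [closure_ball _ hR0.ne'])).diffContOnCl
  have hsp : ∀ ζ ∈ sphere (0 : ℂ) R, ζ ≠ 0 ∧ ‖ζ‖ = R ∧ ζ - w ≠ 0 := by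
    intro ζ hζ
    have hn : ‖ζ‖ = R := by simpa using hζ
    refine ⟨norm_pos_iff.1 (hn ▸ hR0), hn, fun h => ?_⟩
    rw [sub_eq_zero.1 h] at hn; linarith
  have hden : ∀ ζ ∈ closedBall (0 : ℂ) R, 1 - (starRingEnd ℂ) w * ζ / (R : ℂ) ^ 2 ≠ 0 := by
    intro ζ hζ h
    have hn : ‖ζ‖ ≤ R := by simpa using hζ
    have h1 : (starRingEnd ℂ) w * ζ / (R : ℂ) ^ 2 = 1 := (sub_eq_zero.1 h).symm
    have h2 := congrArg norm h1
    simp only [norm_div, norm_mul, RCLike.norm_conj, norm_pow, norm_real, Real.norm_eq_abs, habs,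
      norm_one] at h2
    rw [div_eq_one_iff_eq (by positivity)] at h2
    nlinarith [norm_nonneg w, norm_nonneg ζ]
  have h1 := hd.circleAverage_smul_div (w := w) (by simpa [habs] using hw)
  have hd2 : DiffContOnCl ℂ (fun ζ => (1 - (starRingEnd ℂ) w * ζ / (R : ℂ) ^ 2)⁻¹ * v ζ)
      (ball 0 |R|) := by
    rw [habs]
    refine DifferentiableOn.diffContOnCl ?_
    rw [closure_ball _ hR0.ne']
    exact (DifferentiableOn.inv (by fun_prop) hden).mul (hv.mono hsub)
  have h2 := hd2.circleAverage
  have hvc : ContinuousOn v (sphere 0 R) :=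
    hv.continuousOn.mono (sphere_subset_closedBall.trans hsub)
  have hi1 : CircleIntegrable (fun ζ => a * ((ζ - 0) / (ζ - w) * v ζ)) 0 R := by
    refine ContinuousOn.circleIntegrable hR0.le ?_
    exact continuousOn_const.mul
      ((ContinuousOn.div (by fun_prop) (by fun_prop) fun ζ hζ => (hsp ζ hζ).2.2).mul hvc)
  have hi2 : CircleIntegrable (fun ζ => (starRingEnd ℂ) a *
      ((1 - (starRingEnd ℂ) w * ζ / (R : ℂ) ^ 2)⁻¹ * v ζ)) 0 R := by
    refine ContinuousOn.circleIntegrable hR0.le ?_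
    exact continuousOn_const.mul ((ContinuousOn.inv₀ (by fun_prop)
      fun ζ hζ => hden ζ (sphere_subset_closedBall hζ)).mul hvc)
  have hsum : a * v w + (starRingEnd ℂ) a * v 0 =
      Real.circleAverage (fun ζ => a * ((ζ - 0) / (ζ - w) * v ζ) + (starRingEnd ℂ) a *
        ((1 - (starRingEnd ℂ) w * ζ / (R : ℂ) ^ 2)⁻¹ * v ζ)) 0 R := by
    rw [Real.circleAverage_fun_add hi1 hi2]
    congr 1
    · rw [← h1]
      exact (Real.circleAverage_fun_smul (𝕜 := ℂ) (a := a)).symm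
    · have h3 : v 0 = (1 - (starRingEnd ℂ) w * 0 / (R : ℂ) ^ 2)⁻¹ * v 0 := by simp
      rw [h3, ← h2]
      exact (Real.circleAverage_fun_smul (𝕜 := ℂ) (a := (starRingEnd ℂ) a)).symm
  have hre := reCLM.circleAverage_comp_comm (hi1.add hi2)
  rw [hsum]
  refine Eq.trans (Real.circleAverage_congr_sphere ?_) hre
  intro ζ hζ
  rw [habs] at hζ
  obtain ⟨hζ0, hζR, hζw⟩ := hsp ζ hζ
  have e1 : (ζ - 0) / (ζ - w) = (1 - w / ζ)⁻¹ := by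
    rw [sub_zero, one_sub_div hζ0, inv_div]
  have e2 : (1 - (starRingEnd ℂ) w * ζ / (R : ℂ) ^ 2)⁻¹ = (starRingEnd ℂ) ((1 - w / ζ)⁻¹) := by
    have hc0 : (starRingEnd ℂ) ζ ≠ 0 := by simpa using hζ0
    have : (R : ℂ) ^ 2 = ζ * (starRingEnd ℂ) ζ := by
      rw [mul_conj, normSq_eq_norm_sq, hζR]; push_cast; rfl
    rw [map_inv₀, map_sub, map_div₀, map_one, this]
    congr 2
    field_simp
  simp only [Function.comp_apply, Pi.add_apply, reCLM_apply]
  rw [e1, e2]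
  have e3 : a * ((1 - w / ζ)⁻¹ * v ζ) + (starRingEnd ℂ) a * ((starRingEnd ℂ) ((1 - w / ζ)⁻¹) * v ζ) =
      ((2 * (a * (1 - w / ζ)⁻¹).re : ℝ) : ℂ) * v ζ := by
    have := add_conj (a * (1 - w / ζ)⁻¹)
    rw [map_mul] at this
    rw [← this]; ring
  rw [e3, re_ofReal_mul, mul_comm]

theorem le_re_exp_mul_integral_ray {v : ℂ → ℂ} (hv : DifferentiableOn ℂ v (ball 0 1))
    (hpos : ∀ z ∈ ball (0 : ℂ) 1, 0 ≤ (v z).re) {z : ℂ} (hz : z ∈ ball (0 : ℂ) 1) (hz0 : z ≠ 0)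
    {ν : ℝ} (hν : |ν| ≤ 2 * Real.pi / 5) :
    -(1.76 * (v 0).re) ≤ (exp (ν * I) * (∫ t in (0 : ℝ)..1, v (t * z)) +
      (starRingEnd ℂ) (exp (ν * I)) * v 0).re := by
  set a := exp (ν * I) with ha
  have hz1 : ‖z‖ < 1 := by simpa using hz
  have hzpos : 0 < ‖z‖ := norm_pos_iff.2 hz0
  obtain ⟨R, hzR, hR1⟩ := exists_between hz1
  have hR0 : 0 < R := hzpos.trans hzR
  have hsub : closedBall (0 : ℂ) R ⊆ ball 0 1 := closedBall_subset_ball hR1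
  have hvc : ContinuousOn v (sphere 0 R) :=
    hv.continuousOn.mono (sphere_subset_closedBall.trans hsub)
  have hsp : ∀ ζ ∈ sphere (0 : ℂ) R, ζ ≠ 0 ∧ ‖z / ζ‖ < 1 := by
    intro ζ hζ
    have hn : ‖ζ‖ = R := by simpa using hζ
    exact ⟨norm_pos_iff.1 (hn ▸ hR0), by rw [norm_div, hn, div_lt_one hR0]; exact hzR⟩
  set K : ℝ → ℂ → ℝ := fun t ζ => (v ζ).re * (2 * (a * (1 - t * z / ζ)⁻¹).re) with hK
  have hKc : ContinuousOn (Function.uncurry K) (Icc 0 1 ×ˢ sphere (0 : ℂ) R) := by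
    have hvs : ContinuousOn (fun p : ℝ × ℂ => v p.2) (Icc 0 1 ×ˢ sphere (0 : ℂ) R) :=
      hvc.comp continuousOn_snd fun p hp => hp.2
    have hinv : ContinuousOn (fun p : ℝ × ℂ => (1 - (p.1 : ℂ) * z / p.2)⁻¹)
        (Icc 0 1 ×ˢ sphere (0 : ℂ) R) := by
      refine ContinuousOn.inv₀ ?_ fun p hp => ?_
      · exact continuousOn_const.sub
          (ContinuousOn.div (by fun_prop) (by fun_prop) fun p hp => (hsp _ hp.2).1)
      · rw [mul_div_assoc]
        exact slitPlane_ne_zero (one_sub_ofReal_mul_mem_slitPlane (hsp _ hp.2).2 hp.1)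
    exact (continuous_re.comp_continuousOn hvs).mul (continuousOn_const.mul
      (continuous_re.comp_continuousOn (continuousOn_const.mul hinv)))
  have hKint : MeasureTheory.IntegrableOn (Function.uncurry fun t θ => K t (circleMap 0 R θ))
      (uIoc 0 1 ×ˢ uIoc 0 (2 * Real.pi)) := by
    have hc : ContinuousOn (Function.uncurry fun t θ => K t (circleMap 0 R θ))
        (Icc 0 1 ×ˢ Icc 0 (2 * Real.pi)) := by
      refine hKc.comp (f := fun p : ℝ × ℝ => (p.1, circleMap 0 R p.2)) ?_ fun p hp =>
        ⟨hp.1, circleMap_mem_sphere 0 hR0.le _⟩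
      exact Continuous.continuousOn
        (continuous_fst.prodMk ((continuous_circleMap 0 R).comp continuous_snd))
    refine (hc.integrableOn_compact (isCompact_Icc.prod isCompact_Icc)).mono_set ?_
    rw [uIoc_of_le zero_le_one, uIoc_of_le Real.two_pi_pos.le]
    exact prod_mono Ioc_subset_Icc_self Ioc_subset_Icc_self
  have hmem : ∀ t ∈ uIcc (0 : ℝ) 1, ‖(t : ℂ) * z‖ < R := by
    intro t ht
    rw [uIcc_of_le zero_le_one] at ht
    rw [norm_mul, norm_real, Real.norm_eq_abs, abs_of_nonneg ht.1]
    nlinarith [ht.2]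
  have hray : IntervalIntegrable (fun t : ℝ => v (t * z)) MeasureTheory.volume 0 1 := by
    refine ContinuousOn.intervalIntegrable (hv.continuousOn.comp (by fun_prop) fun t ht => ?_)
    simpa using (hmem t ht).trans hR1
  have hleft : (a * (∫ t in (0 : ℝ)..1, v (t * z)) + (starRingEnd ℂ) a * v 0).re =
      ∫ t in (0 : ℝ)..1, Real.circleAverage (K t) 0 R := by
    have h1 : a * (∫ t in (0 : ℝ)..1, v (t * z)) + (starRingEnd ℂ) a * v 0 =
        ∫ t in (0 : ℝ)..1, (a * v (t * z) + (starRingEnd ℂ) a * v 0) := by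
      rw [intervalIntegral.integral_add (hray.const_mul a) (by simp),
        intervalIntegral.integral_const_mul]
      simp
    rw [h1]
    refine ((reCLM.intervalIntegral_comp_comm
      ((hray.const_mul a).add (by simp))).symm).trans ?_
    refine intervalIntegral.integral_congr fun t ht => ?_
    exact (circleAverage_re_mul_re hv hR0 hR1 (hmem t ht) a).symm
  have hswap : (∫ t in (0 : ℝ)..1, Real.circleAverage (K t) 0 R) =
      Real.circleAverage (fun ζ => (v ζ).re * (2 * (a * logKernel (z / ζ)).re)) 0 R := by
    simp only [Real.circleAverage_def, intervalIntegral.integral_smul]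
    rw [MeasureTheory.intervalIntegral_intervalIntegral_swap hKint]
    congr 1
    refine intervalIntegral.integral_congr fun θ _ => ?_
    have hζ := (hsp _ (circleMap_mem_sphere 0 hR0.le θ)).2
    simp only [hK, intervalIntegral.integral_const_mul, logKernel]
    congr 2
    rw [← intervalIntegral.integral_const_mul]
    refine Eq.trans ?_ (reCLM.intervalIntegral_comp_comm
      ((intervalIntegrable_inv_one_sub hζ).const_mul a))
    simp [mul_div_assoc]
  have hsmul : ContinuousOn (fun ζ => (-1.76 : ℝ) • v ζ) (sphere 0 R) :=
    hvc.const_smul (-1.76 : ℝ)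
  have hlower : Real.circleAverage (fun ζ => ((-1.76 : ℝ) • v ζ).re) 0 R = -(1.76 * (v 0).re) := by
    have hd : DiffContOnCl ℂ (fun ζ => (-1.76 : ℝ) • v ζ) (ball 0 |R|) := by
      rw [abs_of_pos hR0]
      refine DifferentiableOn.diffContOnCl ?_
      rw [closure_ball _ hR0.ne']
      exact (hv.mono hsub).const_smul (-1.76 : ℝ)
    have hi : CircleIntegrable (fun ζ => (-1.76 : ℝ) • v ζ) 0 R :=
      hsmul.circleIntegrable hR0.le
    refine (reCLM.circleAverage_comp_comm hi).trans ?_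
    rw [hd.circleAverage]
    simp
  rw [hleft, hswap, ← hlower]
  refine Real.circleAverage_mono ?_ ?_ ?_
  · exact ContinuousOn.circleIntegrable hR0.le
      (continuous_re.comp_continuousOn hsmul)
  · refine ContinuousOn.circleIntegrable hR0.le ?_
    have hlk : ContinuousOn (fun ζ => logKernel (z / ζ)) (sphere 0 R) := by
      have hdiv : ContinuousOn (fun ζ => z / ζ) (sphere 0 R) :=
        continuousOn_const.div continuousOn_id fun ζ hζ => (hsp ζ hζ).1
      have : ContinuousOn (fun ζ => -log (1 - z / ζ) / (z / ζ)) (sphere 0 R) := by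
        refine ContinuousOn.div (ContinuousOn.neg ?_) hdiv
          fun ζ hζ => div_ne_zero hz0 (hsp ζ hζ).1
        refine (continuousOn_const.sub hdiv).clog fun ζ hζ => ?_
        simpa using one_sub_ofReal_mul_mem_slitPlane (hsp ζ hζ).2 (t := 1) (by simp)
      refine this.congr fun ζ hζ => ?_
      rw [eq_div_iff (div_ne_zero hz0 (hsp ζ hζ).1), mul_comm, mul_logKernel (hsp ζ hζ).2]
    exact (continuous_re.comp_continuousOn hvc).mul (continuousOn_const.mul
      (continuous_re.comp_continuousOn (continuousOn_const.mul hlk)))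
  · intro ζ hζ
    rw [abs_of_pos hR0] at hζ
    have h1 := neg_le_re_exp_mul_logKernel (hsp ζ hζ).2 hν
    have h2 := hpos ζ (hsub (sphere_subset_closedBall hζ))
    rw [← ha] at h1
    simp only [smul_re, smul_eq_mul]
    nlinarith

/-- Lower bound for the rotations of `g z / z` when `Re g' ≥ 0.57`. -/
theorem neg_lt_re_div_mul_exp {g : ℂ → ℂ} (hd : DifferentiableOn ℂ g (ball 0 1)) (h0 : g 0 = 0)
    (h1 : deriv g 0 = 1) (h : ∀ z ∈ ball (0 : ℂ) 1, 0.57 ≤ (deriv g z).re) {z : ℂ}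
    (hz : z ∈ ball (0 : ℂ) 1) (hz0 : z ≠ 0) {ν : ℝ} (hν : |ν| ≤ 2 * Real.pi / 5) :
    -0.722 < (g z / z * exp (ν * I)).re := by
  have hv : DifferentiableOn ℂ (fun z => deriv g z - 0.57) (ball 0 1) :=
    (hd.deriv isOpen_ball).sub_const _
  have key := le_re_exp_mul_integral_ray hv (fun z hz => by
    have := h z hz
    norm_num at this ⊢
    linarith) hz hz0 hν
  have hint := intervalIntegrable_deriv_ray hd hz
  have hgz : g z / z = ∫ t in (0 : ℝ)..1, deriv g (t * z) := by
    rw [div_eq_iff hz0, mul_comm, ← eq_mul_integral_deriv hd h0 hz]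
  rw [intervalIntegral.integral_sub hint (by simp), ← hgz, h1] at key
  have hcos := cos_gt_of_abs_le hν
  have e1 : (exp (ν * I)).re = Real.cos ν := exp_ofReal_mul_I_re ν
  have e2 : (exp (ν * I)).im = Real.sin ν := exp_ofReal_mul_I_im ν
  norm_num [e1, e2] at key
  simp only [mul_re, e1, e2]
  norm_num at hcos ⊢
  nlinarith

theorem IsConvexOfOrder.exists_log {f : ℂ → ℂ} (hf : IsConvexOfOrder (3 / 5) f) :
    ∃ L : ℂ → ℂ, ∀ z ∈ ball (0 : ℂ) 1, HasDerivAt L (deriv (deriv f) z / deriv f z) z ∧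
      deriv f z = exp (L z) ∧ |(L z).im| < 2 * Real.pi / 5 ∧
      (1 / (1 + ‖z‖)) ^ (4 / 5 : ℝ) ≤ (deriv f z).re := by
  obtain ⟨L, hL, hexp, hQ⟩ := exists_log_deriv hf.1 hf.2.2.1 hf.2.2.2
  refine ⟨L, fun z hz => ⟨hL z hz, hexp z hz, ?_⟩⟩
  obtain ⟨Q, hQre, hLQ⟩ := hQ z hz
  have hpos : 0 < 1 / (1 + ‖z‖) := by positivity
  have hQ0 : 0 < Q.re := hpos.trans_le hQre
  constructor
  · have him : (L z).im = 4 / 5 * arg Q := by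
      rw [hLQ, show (4 / 5 : ℂ) = ((4 / 5 : ℝ) : ℂ) by norm_num, im_ofReal_mul, log_im]
    have harg := abs_arg_lt_pi_div_two_iff.2 (Or.inl hQ0)
    rw [him, abs_mul, abs_of_pos (by norm_num : (0 : ℝ) < 4 / 5)]
    linarith
  · rw [hexp z hz, hLQ]
    exact (Real.rpow_le_rpow hpos.le hQre (by norm_num)).trans (rpow_re_le_re_exp_log hQ0)

theorem IsConvexOfOrder.le_re_div_self {f : ℂ → ℂ} (hf : IsConvexOfOrder (3 / 5) f) {z : ℂ}
    (hz : z ∈ ball (0 : ℂ) 1) (hz0 : z ≠ 0) : 0.722 ≤ (f z / z).re := by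
  obtain ⟨L, hL⟩ := hf.exists_log
  exact _root_.le_re_div_self hf.1 hf.2.1 (fun z hz => (hL z hz).2.2.2) hz hz0

theorem IsConvexOfOrder.re_deriv_div_pos {f g : ℂ → ℂ} (hf : IsConvexOfOrder (3 / 5) f)
    (hg : IsConvexOfOrder (3 / 5) g) {z : ℂ} (hz : z ∈ ball (0 : ℂ) 1) (hz0 : z ≠ 0) :
    0 < (deriv f z / (f z / z + g z / z)).re := by
  obtain ⟨L, hL⟩ := hf.exists_log
  obtain ⟨M, hM⟩ := hg.exists_log
  have hg57 : ∀ z ∈ ball (0 : ℂ) 1, 0.57 ≤ (deriv g z).re := fun z hz =>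
    (le_inv_one_add_rpow (norm_nonneg z) (by simpa using (mem_ball_zero_iff.1 hz).le)).trans
      (hM z hz).2.2.2
  obtain ⟨-, hexp, hψ, -⟩ := hL z hz
  have h1 := le_re_div_mul_exp hf.1 (fun z hz => (hL z hz).1) (fun z hz => (hL z hz).2.1)
    (fun z hz => lt_trans (by norm_num) (hf.2.2.2 z hz).2)
    (fun z hz => (hL z hz).2.2.1.trans (by linarith [Real.pi_pos]))
    (fun z hz hz0 => hf.le_re_div_self hz hz0) hz hz0
  have h2 := neg_lt_re_div_mul_exp hg.1 hg.2.1 hg.2.2.1 hg57 hz hz0 (ν := -(L z).im)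
    (by rw [abs_neg]; exact hψ.le)
  rw [ofReal_neg, neg_mul] at h2
  set S := f z / z + g z / z with hS
  have h3 : 0 < (S * exp (-((L z).im * I))).re := by
    rw [hS, add_mul, add_re]; linarith
  have h4 : (S / deriv f z).re = Real.exp (-(L z).re) * (S * exp (-((L z).im * I))).re := by
    rw [← re_ofReal_mul, ofReal_exp, hexp, div_eq_mul_inv, ← exp_neg, mul_left_comm, ← exp_add]
    congr 3
    conv_lhs => rw [← re_add_im (L z)]
    push_cast; ring
  have h5 : 0 < (S / deriv f z).re := by rw [h4]; positivity
  rw [← inv_div, inv_re]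
  refine div_pos h5 (normSq_pos.2 fun h => ?_)
  rw [h] at h5; simp at h5

/-- The **Noshiro–Warschawski theorem**. -/
theorem injOn_of_convex_of_re_deriv_pos {H H' : ℂ → ℂ} {U : Set ℂ} (hU : Convex ℝ U)
    (hH : ∀ s ∈ U, HasDerivAt H (H' s) s) (hpos : ∀ s ∈ U, 0 < (H' s).re) : InjOn H U := by
  intro a ha b hb hab
  by_contra hne
  have hba : 0 < normSq (b - a) := normSq_pos.2 (sub_ne_zero.2 (Ne.symm hne))
  have hmem : ∀ t ∈ Icc (0 : ℝ) 1, a + t * (b - a) ∈ U := fun t ht => by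
    simpa using hU.add_smul_sub_mem ha hb ht
  have hder : ∀ t ∈ Icc (0 : ℝ) 1, HasDerivAt
      (fun t : ℝ => (H (a + t * (b - a)) * (starRingEnd ℂ) (b - a)).re)
      (H' (a + t * (b - a)) * (b - a) * (starRingEnd ℂ) (b - a)).re t := fun t ht =>
    hasDerivAt_re (((hH _ (hmem t ht)).comp t
      ((hasDerivAt_ofReal_mul (b - a) t).const_add a)).mul_const _)
  obtain ⟨t, ht, hslope⟩ := exists_hasDerivAt_eq_slope _ _ zero_lt_one
    (fun t ht => (hder t ht).continuousAt.continuousWithinAt)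
    (fun t ht => hder t (Ioo_subset_Icc_self ht))
  have hp := hpos _ (hmem t (Ioo_subset_Icc_self ht))
  rw [mul_assoc, mul_conj, re_mul_ofReal] at hslope
  refine (mul_pos hp hba).ne' (hslope.trans ?_)
  simp [hab]

theorem injOn_ball_of_re_mul_deriv_div_pos {h : ℂ → ℂ} (hd : DifferentiableOn ℂ h (ball 0 1))
    (h0 : h 0 = 0) (hre : ∀ z ∈ ball (0 : ℂ) 1, z ≠ 0 → 0 < (h z / z).re)
    (hstar : ∀ z ∈ ball (0 : ℂ) 1, z ≠ 0 → 0 < (z * deriv h z / h z).re) :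
    InjOn h (ball 0 1) := by
  have hne : ∀ z ∈ ball (0 : ℂ) 1, z ≠ 0 → h z ≠ 0 := fun z hz hz0 hh => by
    simpa [hh] using hre z hz hz0
  have hU : ∀ s ∈ {s : ℂ | s.re < 0}, exp s ∈ ball (0 : ℂ) 1 := fun s hs => by
    simpa [norm_exp] using hs
  have hH : ∀ s ∈ {s : ℂ | s.re < 0}, HasDerivAt (fun s => s + log (h (exp s) / exp s))
      (exp s * deriv h (exp s) / h (exp s)) s := fun s hs => by
    have hs1 := hU s hs
    have hes := exp_ne_zero s
    have hh := hne _ hs1 hes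
    have hdh : HasDerivAt h (deriv h (exp s)) (exp s) :=
      (hd.differentiableAt (isOpen_ball.mem_nhds hs1)).hasDerivAt
    have hq := (hdh.comp s (hasDerivAt_exp s)).div (hasDerivAt_exp s) hes
    have hlog := (hasDerivAt_id s).add (hq.clog (Or.inl (hre _ hs1 hes)))
    refine hlog.congr_deriv ?_
    simp only [Function.comp_apply, Pi.div_apply]
    field_simp
    ring
  have hinj := injOn_of_convex_of_re_deriv_pos (convex_halfSpace_re_lt 0) hH
    fun s hs => hstar _ (hU s hs) (exp_ne_zero s)
  have hexpH : ∀ s ∈ {s : ℂ | s.re < 0}, exp (s + log (h (exp s) / exp s)) = h (exp s) :=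
    fun s hs => by
      have hes := exp_ne_zero s
      rw [exp_add, exp_log (div_ne_zero (hne _ (hU s hs) hes) hes), mul_div_cancel₀ _ hes]
  intro a ha b hb hab
  rcases eq_or_ne a 0 with rfl | ha0
  · by_contra hb0
    exact hne b hb (Ne.symm hb0) (by rw [← hab, h0])
  rcases eq_or_ne b 0 with rfl | hb0
  · exact absurd (hab.trans h0) (hne a ha ha0)
  have hlog : ∀ c ∈ ball (0 : ℂ) 1, c ≠ 0 → log c ∈ {s : ℂ | s.re < 0} := fun c hc hc0 => by
    rw [mem_ofPred_eq, log_re]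
    exact Real.log_neg (norm_pos_iff.2 hc0) (by simpa using hc)
  have ea := hexpH _ (hlog a ha ha0)
  have eb := hexpH _ (hlog b hb hb0)
  rw [exp_log ha0] at ea
  rw [exp_log hb0] at eb
  obtain ⟨n, hn⟩ := exp_eq_exp_iff_exists_int.1 (eb.trans (hab.symm.trans ea.symm))
  have hexp : exp (log a + n * (2 * Real.pi * I)) = a := by
    rw [exp_periodic.int_mul n (log a), exp_log ha0]
  have hmem : log a + n * (2 * Real.pi * I) ∈ {s : ℂ | s.re < 0} := by
    have := hlog a ha ha0
    simpa using this
  have heq := hinj (hlog b hb hb0) hmem (by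
    simp only [hexp, exp_log hb0]
    rw [hn]; ring)
  rw [← hexp, ← heq, exp_log hb0]

theorem ofReal_mul_mem_image_ball_of_re_mul_deriv_div_pos {h : ℂ → ℂ}
    (hd : DifferentiableOn ℂ h (ball 0 1)) (h0 : h 0 = 0)
    (hstar : ∀ z ∈ ball (0 : ℂ) 1, z ≠ 0 → 0 < (z * deriv h z / h z).re)
    {w : ℂ} (hw : w ∈ h '' ball 0 1) {t : ℝ} (ht : t ∈ Icc (0 : ℝ) 1) :
    t * w ∈ h '' ball 0 1 := by
  obtain ⟨z₀, hz₀, rfl⟩ := hw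
  have hr : ‖z₀‖ < 1 := by simpa using hz₀
  have hsub : closedBall (0 : ℂ) ‖z₀‖ ⊆ ball 0 1 := closedBall_subset_ball hr
  rcases eq_or_ne (h z₀) 0 with hw0 | hw0
  · exact ⟨0, by simp, by simp [h0, hw0]⟩
  set S : Set ℝ := {x | ((1 - x : ℝ) : ℂ) * h z₀ ∈ h '' closedBall 0 ‖z₀‖} with hS
  suffices hIcc : Icc 0 1 ⊆ S by
    have := hIcc (⟨by linarith [ht.2], by linarith [ht.1]⟩ : 1 - t ∈ Icc (0 : ℝ) 1)
    rw [hS, mem_ofPred_eq, sub_sub_cancel] at this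
    exact image_mono hsub this
  have hcomp : IsCompact (h '' closedBall 0 ‖z₀‖) :=
    (isCompact_closedBall _ _).image_of_continuousOn (hd.continuousOn.mono hsub)
  refine IsClosed.Icc_subset_of_forall_exists_gt
    ((hcomp.isClosed.preimage (by fun_prop)).inter isClosed_Icc) ⟨z₀, by simp⟩ ?_
  rintro x ⟨⟨z, hz, hzx⟩, -, hx1⟩ y hy
  have hz1 := hsub hz
  have hx0 : (0 : ℝ) < 1 - x := by linarith
  have hxc : ((1 - x : ℝ) : ℂ) ≠ 0 := ofReal_ne_zero.2 hx0.ne'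
  have hz0 : z ≠ 0 := by
    rintro rfl
    rw [h0] at hzx
    exact (mul_ne_zero hxc hw0) hzx.symm
  have hst := hstar z hz1 hz0
  have hd0 : deriv h z ≠ 0 := fun hh => by simp [hh] at hst
  have hstrict : HasStrictDerivAt h (deriv h z) z :=
    (hd.analyticAt (isOpen_ball.mem_nhds hz1)).hasStrictDerivAt
  set k := hstrict.localInverse h (deriv h z) z hd0 with hk
  have hkz : k (h z) = z := HasStrictFDerivAt.localInverse_apply_image ..
  have hkd : HasDerivAt k (deriv h z)⁻¹ (((1 - x : ℝ) : ℂ) * h z₀) :=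
    hzx ▸ (hstrict.to_localInverse hd0).hasDerivAt
  have hγ : HasDerivAt (fun x : ℝ => ((1 - x : ℝ) : ℂ) * h z₀) (-h z₀) x := by
    have := (((hasDerivAt_id x).const_sub 1).ofReal_comp).mul_const (h z₀)
    simpa using this
  have hnorm := hasDerivAt_normSq_comp (γ := fun x : ℝ => ((1 - x : ℝ) : ℂ) * h z₀) hkd hγ
  have hneg : 2 * ((starRingEnd ℂ) (k (((1 - x : ℝ) : ℂ) * h z₀)) *
      ((deriv h z)⁻¹ * -h z₀)).re < 0 := by
    rw [← hzx, hkz]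
    have hh0 : h z ≠ 0 := fun hh => by simp [hh] at hst
    have e : (starRingEnd ℂ) z * ((deriv h z)⁻¹ * -h z₀) =
        ((-(normSq z / (1 - x)) : ℝ) : ℂ) * (z * deriv h z / h z)⁻¹ := by
      have : h z₀ = h z / ((1 - x : ℝ) : ℂ) := by rw [hzx]; field_simp
      rw [this, ofReal_neg, ofReal_div, ← mul_conj]
      field_simp
    rw [e, re_ofReal_mul, inv_re]
    have h1 := normSq_pos.2 hz0
    have h2 : 0 < normSq (z * deriv h z / h z) :=
      normSq_pos.2 (div_ne_zero (mul_ne_zero hz0 hd0) hh0)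
    have h3 : 0 < normSq z / (1 - x) * ((z * deriv h z / h z).re /
      normSq (z * deriv h z / h z)) := by positivity
    linarith
  have hslope := (hasDerivAt_iff_tendsto_slope.1 hnorm).eventually_lt_const hneg
  have hinv : ∀ᶠ s : ℝ in 𝓝 x, h (k (((1 - s : ℝ) : ℂ) * h z₀)) = ((1 - s : ℝ) : ℂ) * h z₀ :=
    hγ.continuousAt.eventually (hzx ▸ hstrict.eventually_right_inverse hd0)
  have hev : ∀ᶠ s in 𝓝[>] x, s ∈ S := by
    filter_upwards [hslope.filter_mono (nhdsWithin_mono x fun s hs => ne_of_gt hs),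
      hinv.filter_mono nhdsWithin_le_nhds, self_mem_nhdsWithin] with s hs1 hs2 hs3
    refine ⟨_, ?_, hs2⟩
    have hlt : normSq (k (((1 - s : ℝ) : ℂ) * h z₀)) < normSq z := by
      rw [slope_def_field, div_neg_iff] at hs1
      rcases hs1 with hs1 | hs1
      · linarith [hs1.2, mem_Ioi.1 hs3]
      · rw [← hzx, hkz] at hs1; linarith [hs1.1]
    rw [normSq_eq_norm_sq, normSq_eq_norm_sq] at hlt
    rw [mem_closedBall_zero_iff] at hz ⊢
    exact (lt_of_pow_lt_pow_left₀ 2 (norm_nonneg z) hlt).le.trans hz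
  obtain ⟨s, hs⟩ := (hev.and (Ioc_mem_nhdsGT hy)).exists
  exact ⟨s, hs⟩

end

/-- if `f, g ∈ K(3/5)` then `(f+g)/2` is injective on the unit disk and
its image is starlike with respect to `0`, i.e. `(f+g)/2 ∈ S*`. -/
theorem avg_starlike_of_convexOfOrder_threeFifths (f g : ℂ → ℂ)
    (hf : IsConvexOfOrder (3 / 5) f) (hg : IsConvexOfOrder (3 / 5) g) :
    Set.InjOn (fun z => (f z + g z) / 2) unitDisk ∧
    ∀ w ∈ (fun z => (f z + g z) / 2) '' unitDisk, ∀ t ∈ Set.Icc (0 : ℝ) 1,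
      (t : ℂ) * w ∈ (fun z => (f z + g z) / 2) '' unitDisk := by
  have hd : DifferentiableOn ℂ (fun z => (f z + g z) / 2) (Metric.ball 0 1) :=
    (hf.1.add hg.1).div_const 2
  have h0 : (f 0 + g 0) / 2 = 0 := by simp [hf.2.1, hg.2.1]
  have hre : ∀ z ∈ Metric.ball (0 : ℂ) 1, z ≠ 0 → 0 < ((f z + g z) / 2 / z).re := by
    intro z hz hz0
    have h1 := hf.le_re_div_self hz hz0
    have h2 := hg.le_re_div_self hz hz0
    have e : (f z + g z) / 2 / z = ((1 / 2 : ℝ) : ℂ) * (f z / z + g z / z) := by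
      push_cast; ring
    rw [e, Complex.re_ofReal_mul, Complex.add_re]
    linarith
  have hstar : ∀ z ∈ Metric.ball (0 : ℂ) 1, z ≠ 0 →
      0 < (z * deriv (fun z => (f z + g z) / 2) z / ((f z + g z) / 2)).re := by
    intro z hz hz0
    have hnhds := Metric.isOpen_ball.mem_nhds hz
    have hderiv : deriv (fun z => (f z + g z) / 2) z = (deriv f z + deriv g z) / 2 :=
      (((hf.1.differentiableAt hnhds).hasDerivAt.add
        (hg.1.differentiableAt hnhds).hasDerivAt).div_const 2).deriv
    have h1 := hf.re_deriv_div_pos hg hz hz0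
    have h2 := hg.re_deriv_div_pos hf hz hz0
    have e : z * ((deriv f z + deriv g z) / 2) / ((f z + g z) / 2) =
        deriv f z / (f z / z + g z / z) + deriv g z / (g z / z + f z / z) := by
      rw [add_comm (g z / z), ← add_div, ← add_div]
      field_simp
    rw [hderiv, e, Complex.add_re]
    linarith
  exact ⟨injOn_ball_of_re_mul_deriv_div_pos hd h0 hre hstar, fun w hw t ht =>
    ofReal_mul_mem_image_ball_of_re_mul_deriv_div_pos hd h0 hstar hw ht⟩
end

section
/- For 0 < α < 1, the function φ_α(θ) = θ + arg h_α'(e^{iθ}) (where arg is the principal argument and h_α extends analytically across the unit circle minus the point 1) is a continuous, strictly increasing bijection from the interval (0, π] onto the interval ((1−α)π, π]. -/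
/-- `φ_α(θ) = θ + arg h_α'(e^{iθ})`. -/
noncomputable def phiFun (α : ℝ) (θ : ℝ) : ℝ :=
  θ + (deriv (hfun α) (Complex.exp ((θ : ℂ) * Complex.I))).arg

/-- The plane cut along `[1, ∞)`, on which the principal powers of `1 - z` are analytic. -/
def cutPlane : Set ℂ := {z | 1 - z ∈ Complex.slitPlane}

lemma isOpen_cutPlane : IsOpen cutPlane :=
  Complex.isOpen_slitPlane.preimage (by fun_prop)

lemma zero_mem_cutPlane : (0 : ℂ) ∈ cutPlane := by
  simp [cutPlane]

lemma mem_cutPlane_of_norm_le_one {z : ℂ} (hz : ‖z‖ ≤ 1) (hz1 : z ≠ 1) : z ∈ cutPlane := by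
  have hre : z.re < 1 := by
    refine lt_of_le_of_ne ((Complex.re_le_norm z).trans hz) fun h => hz1 ?_
    have h2 : z.re * z.re + z.im * z.im ≤ 1 := by
      rw [← Complex.normSq_apply, Complex.normSq_eq_norm_sq]
      nlinarith [norm_nonneg z]
    have h3 : z.im = 0 := by
      rw [h] at h2
      nlinarith [sq_nonneg z.im]
    exact Complex.ext (by simpa using h) (by simpa using h3)
  exact Or.inl (by simpa using hre)

lemma one_sub_ne_zero_of_mem_cutPlane {z : ℂ} (hz : z ∈ cutPlane) : 1 - z ≠ 0 :=
  Complex.slitPlane_ne_zero hz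

lemma hasDerivAt_one_sub_cpow (c : ℝ) {z : ℂ} (hz : z ∈ cutPlane) :
    HasDerivAt (fun w : ℂ => (1 - w) ^ (c : ℂ)) (-((c : ℂ) * (1 - z) ^ ((c : ℂ) - 1))) z := by
  have h := ((hasDerivAt_id z).const_sub 1).cpow_const (c := (c : ℂ)) hz
  simpa using h

lemma hasDerivAt_kfun (α : ℝ) {z : ℂ} (hz : z ∈ cutPlane) :
    HasDerivAt (kfun α) ((1 - z) ^ ((2 * α - 2 : ℝ) : ℂ)) z := by
  by_cases h : α = 1 / 2
  · have hk : kfun α = fun z => -Complex.log (1 - z) := by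
      funext z
      simp [kfun, h]
    rw [hk]
    have h1 := (((hasDerivAt_id z).const_sub 1).clog hz).neg
    refine h1.congr_deriv ?_
    rw [h]
    norm_num
    rw [Complex.cpow_neg_one, inv_eq_one_div]
    simp [neg_div]
  · have hk : kfun α = fun z => ((1 - z) ^ ((2 * α - 1 : ℝ) : ℂ) - 1) / ((1 - 2 * α : ℝ) : ℂ) := by
      funext z
      simp only [kfun, if_neg h]
    rw [hk]
    have h1 := ((hasDerivAt_one_sub_cpow (2 * α - 1) hz).sub_const 1).div_const
      ((1 - 2 * α : ℝ) : ℂ)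
    refine h1.congr_deriv ?_
    have hne : ((1 - 2 * α : ℝ) : ℂ) ≠ 0 := by
      rw [Complex.ofReal_ne_zero]
      intro h0
      exact h (by linarith)
    rw [div_eq_iff hne]
    have he : ((2 * α - 1 : ℝ) : ℂ) - 1 = ((2 * α - 2 : ℝ) : ℂ) := by
      push_cast
      ring
    rw [he]
    push_cast
    ring

lemma kfun_zero (α : ℝ) : kfun α 0 = 0 := by
  by_cases h : α = 1 / 2 <;> simp [kfun, h]

lemma hfun_eq_dslope (α : ℝ) : hfun α = dslope (kfun α) 0 := by
  funext z
  by_cases hz : z = 0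
  · simp [hfun, hz, (hasDerivAt_kfun α zero_mem_cutPlane).deriv]
  · simp [hfun, hz, dslope_of_ne, slope_def_field, kfun_zero]

lemma differentiableOn_hfun (α : ℝ) : DifferentiableOn ℂ (hfun α) cutPlane := by
  rw [hfun_eq_dslope, Complex.differentiableOn_dslope
    (isOpen_cutPlane.mem_nhds zero_mem_cutPlane)]
  exact fun z hz => (hasDerivAt_kfun α hz).differentiableAt.differentiableWithinAt

lemma hasDerivAt_hfun (α : ℝ) {z : ℂ} (hz : z ∈ cutPlane) :
    HasDerivAt (hfun α) (deriv (hfun α) z) z :=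
  ((differentiableOn_hfun α).differentiableAt (isOpen_cutPlane.mem_nhds hz)).hasDerivAt

lemma hasDerivAt_deriv_hfun (α : ℝ) {z : ℂ} (hz : z ∈ cutPlane) :
    HasDerivAt (deriv (hfun α)) (deriv (deriv (hfun α)) z) z :=
  (((differentiableOn_hfun α).deriv isOpen_cutPlane).differentiableAt
    (isOpen_cutPlane.mem_nhds hz)).hasDerivAt

lemma mul_hfun (α : ℝ) (z : ℂ) : z * hfun α z = kfun α z := by
  by_cases hz : z = 0
  · simp [hz, kfun_zero]
  · simp [hfun, hz, mul_div_cancel₀]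

lemma hfun_add_mul_deriv (α : ℝ) {z : ℂ} (hz : z ∈ cutPlane) :
    hfun α z + z * deriv (hfun α) z = (1 - z) ^ ((2 * α - 2 : ℝ) : ℂ) := by
  have h1 := (hasDerivAt_id z).mul (hasDerivAt_hfun α hz)
  have h2 : (id * hfun α : ℂ → ℂ) = kfun α := funext (mul_hfun α)
  rw [h2] at h1
  simpa using h1.unique (hasDerivAt_kfun α hz)

lemma two_mul_deriv_hfun_add (α : ℝ) {z : ℂ} (hz : z ∈ cutPlane) :
    2 * deriv (hfun α) z + z * deriv (deriv (hfun α)) z =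
      (2 - 2 * α) * (1 - z) ^ ((2 * α - 3 : ℝ) : ℂ) := by
  have h1 := (hasDerivAt_hfun α hz).add ((hasDerivAt_id z).mul (hasDerivAt_deriv_hfun α hz))
  have h2 := h1.congr_of_eventuallyEq (f₁ := fun w => (1 - w) ^ ((2 * α - 2 : ℝ) : ℂ)) (by
    filter_upwards [isOpen_cutPlane.mem_nhds hz] with w hw
    simpa using (hfun_add_mul_deriv α hw).symm)
  have h3 := h2.unique (hasDerivAt_one_sub_cpow (2 * α - 2) hz)
  have he : ((2 * α - 2 : ℝ) : ℂ) - 1 = ((2 * α - 3 : ℝ) : ℂ) := by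
    push_cast
    ring
  rw [he] at h3
  simp only [id, one_mul] at h3
  push_cast at h3 ⊢
  linear_combination h3

/-- The quotient `h_α' / k_α''`. -/
noncomputable def quotFun (α : ℝ) (z : ℂ) : ℂ :=
  deriv (hfun α) z * (1 - z) ^ ((3 - 2 * α : ℝ) : ℂ) / (2 - 2 * α)

lemma one_sub_cpow_mul_cpow_neg {z : ℂ} (hz : z ∈ cutPlane) {a b : ℝ} (hab : a + b = 0) :
    (1 - z) ^ (a : ℂ) * (1 - z) ^ (b : ℂ) = 1 := by
  rw [← Complex.cpow_add _ _ (one_sub_ne_zero_of_mem_cutPlane hz), ← Complex.ofReal_add, hab]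
  simp

lemma two_sub_two_mul_ne_zero {α : ℝ} (hα : α < 1) : (2 - 2 * α : ℂ) ≠ 0 := by
  have : (2 - 2 * α : ℂ) = ((2 - 2 * α : ℝ) : ℂ) := by
    push_cast
    ring
  rw [this, Complex.ofReal_ne_zero]
  linarith

lemma quotFun_zero {α : ℝ} (hα : α < 1) : quotFun α 0 = 1 / 2 := by
  have h := two_mul_deriv_hfun_add α zero_mem_cutPlane
  have h0 := two_sub_two_mul_ne_zero hα
  simp only [sub_zero, Complex.one_cpow, zero_mul, add_zero, mul_one] at h
  rw [quotFun, div_eq_iff h0]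
  simp only [sub_zero, Complex.one_cpow, mul_one]
  linear_combination h / 2

lemma differentiableAt_quotFun (α : ℝ) {z : ℂ} (hz : z ∈ cutPlane) :
    DifferentiableAt ℂ (quotFun α) z :=
  (((hasDerivAt_deriv_hfun α hz).mul
    (hasDerivAt_one_sub_cpow (3 - 2 * α) hz)).div_const (2 - 2 * α : ℂ)).differentiableAt

/-- The first-order linear differential equation satisfied by `h_α' / k_α''`. -/
lemma mul_deriv_quotFun {α : ℝ} (hα : α < 1) {z : ℂ} (hz : z ∈ cutPlane) :
    z * deriv (quotFun α) z =
      1 - quotFun α z * (2 + ((3 - 2 * α : ℝ) : ℂ) * (z / (1 - z))) := by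
  have h1 : HasDerivAt (quotFun α) _ z := ((hasDerivAt_deriv_hfun α hz).mul
    (hasDerivAt_one_sub_cpow (3 - 2 * α) hz)).div_const (2 - 2 * α : ℂ)
  have h0 := two_sub_two_mul_ne_zero hα
  have hz1 := one_sub_ne_zero_of_mem_cutPlane hz
  have h2 := two_mul_deriv_hfun_add α hz
  have h3 := one_sub_cpow_mul_cpow_neg hz (a := 2 * α - 3) (b := 3 - 2 * α) (by ring)
  rw [h1.deriv, quotFun, Complex.cpow_sub _ _ hz1, Complex.cpow_one]
  set s := (1 - z) ^ ((3 - 2 * α : ℝ) : ℂ)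
  set r := (1 - z) ^ ((2 * α - 3 : ℝ) : ℂ)
  generalize (2 - 2 * α : ℂ) = c at h0 h2 ⊢
  field_simp
  linear_combination (1 - z) * s * h2 + (1 - z) * c * h3

/-- At a point where a function bounded by `‖z‖ / ‖z₀‖` attains modulus one, its logarithmic
derivative is real and at least one. -/
lemma exists_mul_deriv_eq_of_norm_le {ω : ℂ → ℂ} {z₀ ω' : ℂ} (hω : HasDerivAt ω ω' z₀)
    (hz₀ : z₀ ≠ 0) (hmod : ‖ω z₀‖ = 1) (hle : ∀ z, ‖z‖ < ‖z₀‖ → ‖ω z‖ ≤ ‖z‖ / ‖z₀‖) :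
    ∃ n : ℝ, 1 ≤ n ∧ z₀ * ω' = n * ω z₀ := by
  have hω0 : ω z₀ ≠ 0 := by
    intro h
    simp [h] at hmod
  have hsq : (ω z₀).re * (ω z₀).re + (ω z₀).im * (ω z₀).im = 1 := by
    rw [← Complex.normSq_apply, Complex.normSq_eq_norm_sq, hmod, one_pow]
  set A : ℂ := z₀ * ω' / ω z₀ with hA
  have hAω : z₀ * ω' = A * ω z₀ := by
    rw [hA]
    field_simp
  have key : ∀ w : ℂ, w.re < 0 → (A * w).re ≤ w.re := by
    intro w hw
    have hpath : HasDerivAt (fun t : ℝ => ω (z₀ * (1 + t * w))) (A * ω z₀ * w) 0 := by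
      have h1 : HasDerivAt (fun t : ℂ => z₀ * (1 + t * w)) (z₀ * w) ((0 : ℝ) : ℂ) := by
        simpa using (((hasDerivAt_id ((0 : ℝ) : ℂ)).mul_const w).const_add 1).const_mul z₀
      have h2 : HasDerivAt ω ω' (z₀ * (1 + ((0 : ℝ) : ℂ) * w)) := by simpa using hω
      refine (HasDerivAt.comp ((0 : ℝ) : ℂ) (h₂ := ω) h2 h1).comp_ofReal.congr_deriv ?_
      rw [← hAω]
      ring
    have hline : HasDerivAt (fun t : ℝ => 1 + (t : ℂ) * w) w 0 := by
      have h1 : HasDerivAt (fun t : ℂ => 1 + t * w) w ((0 : ℝ) : ℂ) := by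
        simpa using ((hasDerivAt_id ((0 : ℝ) : ℂ)).mul_const w).const_add 1
      exact h1.comp_ofReal
    have hdiff := (hpath.norm_sq.sub hline.norm_sq).tendsto_slope_zero_right
    have hsmall : ∀ᶠ t : ℝ in nhdsWithin 0 (Set.Ioi 0), ‖1 + (t : ℂ) * w‖ < 1 := by
      have hlim : Filter.Tendsto (fun t : ℝ => 2 * w.re + t * (w.re * w.re + w.im * w.im))
          (nhdsWithin 0 (Set.Ioi 0)) (nhds (2 * w.re + 0 * (w.re * w.re + w.im * w.im))) :=
        (Continuous.tendsto (by fun_prop) 0).mono_left nhdsWithin_le_nhds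
      filter_upwards [hlim.eventually_lt_const (by linarith : _ < (0 : ℝ)), self_mem_nhdsWithin]
        with t ht htpos
      rw [← sq_lt_one_iff₀ (norm_nonneg _), ← Complex.normSq_eq_norm_sq, Complex.normSq_apply]
      simp only [Complex.add_re, Complex.one_re, Complex.mul_re, Complex.ofReal_re,
        Complex.ofReal_im, Complex.add_im, Complex.one_im, Complex.mul_im]
      nlinarith [mul_neg_of_pos_of_neg (show (0 : ℝ) < t from htpos) ht]
    have hlimit := le_of_tendsto hdiff (b := 0) (by
      filter_upwards [hsmall, self_mem_nhdsWithin] with t ht htpos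
      have hz₀n : 0 < ‖z₀‖ := norm_pos_iff.mpr hz₀
      have hlt : ‖z₀ * (1 + t * w)‖ < ‖z₀‖ := by
        rw [norm_mul]
        nlinarith
      have hb := hle _ hlt
      rw [norm_mul, mul_div_cancel_left₀ _ hz₀n.ne'] at hb
      have hb2 : ‖ω (z₀ * (1 + t * w))‖ ^ 2 ≤ ‖1 + t * w‖ ^ 2 := by gcongr
      have htinv : (0 : ℝ) ≤ t⁻¹ := inv_nonneg.mpr (le_of_lt htpos)
      simp only [smul_eq_mul, Pi.sub_apply, zero_add, Complex.ofReal_zero, zero_mul, add_zero,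
        mul_one, hmod, norm_one]
      exact mul_nonpos_of_nonneg_of_nonpos htinv (by linarith))
    simp only [Complex.inner, Complex.ofReal_zero, zero_mul, add_zero, mul_one, map_one]
      at hlimit
    have hre : (A * ω z₀ * w * (starRingEnd ℂ) (ω z₀)).re = (A * w).re := by
      have hc : (starRingEnd ℂ) (ω z₀) * ω z₀ = 1 := by
        rw [← Complex.normSq_eq_conj_mul_self, Complex.normSq_apply, hsq, Complex.ofReal_one]
      rw [show A * ω z₀ * w * (starRingEnd ℂ) (ω z₀) =
        ((starRingEnd ℂ) (ω z₀) * ω z₀) * (A * w) by ring, hc, one_mul]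
    rw [hre] at hlimit
    linarith
  have hre : 1 ≤ A.re := by
    have := key (-1) (by simp)
    simp at this
    exact this
  have him : A.im = 0 := by
    by_contra him
    have := key (⟨-1, -(A.re) / A.im⟩) (by simp)
    simp at this
    field_simp at this
    linarith
  refine ⟨A.re, hre, ?_⟩
  rw [hAω]
  congr 1
  exact Complex.ext (by simp) (by simp [him])

lemma re_div_one_sub {z : ℂ} (hz1 : z ≠ 1) :
    (z / (1 - z)).re = -(1 / 2) + (1 - ‖z‖ ^ 2) / (2 * ‖1 - z‖ ^ 2) := by
  have hne : ‖1 - z‖ ≠ 0 := by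
    simpa [sub_eq_zero] using hz1.symm
  have h1 : (z / (1 - z)).re = (z * (starRingEnd ℂ) (1 - z)).re / ‖1 - z‖ ^ 2 := by
    rw [Complex.div_re, ← Complex.normSq_eq_norm_sq]
    simp
    ring
  have h2 : ‖1 - z‖ ^ 2 = (1 - z.re) ^ 2 + z.im ^ 2 := by
    rw [← Complex.normSq_eq_norm_sq, Complex.normSq_apply]
    simp
    ring
  have h3 : ‖z‖ ^ 2 = z.re ^ 2 + z.im ^ 2 := by
    rw [← Complex.normSq_eq_norm_sq, Complex.normSq_apply]
    ring
  rw [h1, h3]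
  field_simp
  rw [h2]
  simp
  ring

lemma re_inv_of_ne_zero {g : ℂ} (hg : g ≠ 0) :
    (g⁻¹).re = 1 + (1 - ‖2 * g - 1‖ ^ 2) / (4 * ‖g‖ ^ 2) := by
  have hne : ‖g‖ ^ 2 ≠ 0 := by simpa using hg
  have h2 : ‖2 * g - 1‖ ^ 2 = (2 * g.re - 1) ^ 2 + 4 * g.im ^ 2 := by
    rw [← Complex.normSq_eq_norm_sq, Complex.normSq_apply]
    simp
    ring
  have h3 : ‖g‖ ^ 2 = g.re ^ 2 + g.im ^ 2 := by
    rw [← Complex.normSq_eq_norm_sq, Complex.normSq_apply]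
    ring
  rw [Complex.inv_re, Complex.normSq_eq_norm_sq]
  field_simp
  rw [h2, h3]
  ring

lemma norm_two_mul_quotFun_sub_one_lt_of_ball {α : ℝ} (hα0 : 0 < α) (hα1 : α < 1) {z₀ : ℂ}
    (hz₀ : z₀ ≠ 0) (hz1 : z₀ ≠ 1) (hz : ‖z₀‖ ≤ 1)
    (hle : ∀ z, ‖z‖ < ‖z₀‖ → ‖2 * quotFun α z - 1‖ ≤ 1) : ‖2 * quotFun α z₀ - 1‖ < 1 := by
  have hmem := mem_cutPlane_of_norm_le_one hz hz1
  have hpos : 0 < ‖z₀‖ := norm_pos_iff.mpr hz₀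
  have hd : HasDerivAt (fun z => 2 * quotFun α z - 1) (2 * deriv (quotFun α) z₀) z₀ :=
    ((differentiableAt_quotFun α hmem).hasDerivAt.const_mul 2).sub_const 1
  have hle1 : ‖2 * quotFun α z₀ - 1‖ ≤ 1 := by
    have hcl : z₀ ∈ closure (Metric.ball (0 : ℂ) ‖z₀‖) := by
      rw [closure_ball _ hpos.ne']
      simp
    have := mem_closure_iff_nhdsWithin_neBot.mp hcl
    refine le_of_tendsto (hd.continuousAt.norm.tendsto.mono_left
      (nhdsWithin_le_nhds (s := Metric.ball (0 : ℂ) ‖z₀‖))) ?_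
    filter_upwards [self_mem_nhdsWithin] with w hw
    exact hle w (by simpa using hw)
  refine lt_of_le_of_ne hle1 fun heq => ?_
  have hschwarz : ∀ z, ‖z‖ < ‖z₀‖ → ‖2 * quotFun α z - 1‖ ≤ ‖z‖ / ‖z₀‖ := by
    intro z hzlt
    have h0 : 2 * quotFun α 0 - 1 = 0 := by
      rw [quotFun_zero hα1]
      norm_num
    have h := Complex.dist_le_div_mul_dist_of_mapsTo_ball (f := fun z => 2 * quotFun α z - 1)
      (c := 0) (z := z) (R₁ := ‖z₀‖) (R₂ := 1) ?_ ?_ (by simpa using hzlt)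
    · simp only [h0, dist_zero_right] at h
      rwa [one_div_mul_eq_div] at h
    · intro w hw
      have hw' : ‖w‖ < ‖z₀‖ := by simpa using hw
      have hw1 : w ≠ 1 := by
        rintro rfl
        simp at hw'
        linarith
      exact (((differentiableAt_quotFun α (mem_cutPlane_of_norm_le_one (hw'.le.trans hz)
        hw1)).const_mul 2).sub_const 1).differentiableWithinAt
    · intro w hw
      simp only [h0, mem_closedBall_zero_iff]
      exact hle w (by simpa using hw)
  obtain ⟨n, hn, hnω⟩ := exists_mul_deriv_eq_of_norm_le hd hz₀ heq hschwarz
  have hode := mul_deriv_quotFun hα1 hmem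
  set g := quotFun α z₀
  set m := z₀ / (1 - z₀) with hm
  by_cases hg : g = 0
  · have : (2 : ℂ) = ((-n : ℝ) : ℂ) := by
      rw [hg] at hnω hode
      push_cast
      linear_combination hnω - 2 * hode
    have : (2 : ℝ) = -n := by exact_mod_cast this
    linarith
  · have hquot : (n : ℂ) - n / 2 * g⁻¹ = g⁻¹ - 2 - ((3 - 2 * α : ℝ) : ℂ) * m := by
      field_simp
      linear_combination 2 * hode - hnω
    have hre := congrArg Complex.re hquot
    have hginv : g⁻¹.re = 1 := by
      rw [re_inv_of_ne_zero hg, heq]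
      norm_num
    have hmge : -(1 / 2) ≤ m.re := by
      rw [hm, re_div_one_sub hz1]
      have : 0 ≤ (1 - ‖z₀‖ ^ 2) / (2 * ‖1 - z₀‖ ^ 2) :=
        div_nonneg (by nlinarith) (by positivity)
      linarith
    have hn2 : (n : ℂ) / 2 = ((n / 2 : ℝ) : ℂ) := by push_cast; rfl
    have h2 : (2 : ℂ).re = 2 := rfl
    rw [hn2, Complex.sub_re, Complex.sub_re, Complex.sub_re, Complex.re_ofReal_mul,
      Complex.re_ofReal_mul, Complex.ofReal_re, hginv, h2] at hre
    nlinarith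

lemma norm_two_mul_quotFun_sub_one_lt_of_norm_lt_one {α : ℝ} (hα0 : 0 < α) (hα1 : α < 1) {z : ℂ}
    (hz : ‖z‖ < 1) : ‖2 * quotFun α z - 1‖ < 1 := by
  by_contra! hcon
  have hne1 : ∀ w : ℂ, ‖w‖ < 1 → w ≠ 1 := by
    rintro w hw rfl
    simp at hw
  have hcont : ContinuousOn (fun w => ‖2 * quotFun α w - 1‖) (Metric.closedBall 0 ‖z‖) := by
    intro w hw
    have hw' : ‖w‖ < 1 := lt_of_le_of_lt (by simpa using hw) hz
    exact (((differentiableAt_quotFun α (mem_cutPlane_of_norm_le_one hw'.le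
      (hne1 w hw'))).continuousAt.const_mul 2).sub continuousAt_const).norm.continuousWithinAt
  have hclosed := hcont.preimage_isClosed_of_isClosed Metric.isClosed_closedBall
    (isClosed_Ici (a := (1 : ℝ)))
  have hcompact := (isCompact_closedBall (0 : ℂ) ‖z‖).of_isClosed_subset hclosed
    Set.inter_subset_left
  obtain ⟨z₀, ⟨hz₀, hz₀ge⟩, hmin⟩ := hcompact.exists_isMinOn ⟨z, by simp, hcon⟩
    continuous_norm.continuousOn
  have hz₀lt : ‖z₀‖ < 1 := lt_of_le_of_lt (by simpa using hz₀) hz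
  have hz₀0 : z₀ ≠ 0 := by
    rintro rfl
    rw [Set.mem_preimage, quotFun_zero hα1] at hz₀ge
    norm_num at hz₀ge
  refine absurd (norm_two_mul_quotFun_sub_one_lt_of_ball hα0 hα1 hz₀0 (hne1 z₀ hz₀lt) hz₀lt.le
    fun w hw => ?_) (not_lt.mpr hz₀ge)
  by_contra! hw1
  have := hmin (a := w) ⟨?_, hw1.le⟩
  · exact absurd hw (not_lt.mpr this)
  · simp only [mem_closedBall_zero_iff] at hz₀ ⊢
    exact hw.le.trans hz₀

/-- The quotient `h_α' / k_α''` maps the unit circle minus the point `1` into the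
disk with diameter `(0, 1)`. -/
lemma norm_two_mul_quotFun_sub_one_lt {α : ℝ} (hα0 : 0 < α) (hα1 : α < 1) {z : ℂ}
    (hz : ‖z‖ = 1) (hz1 : z ≠ 1) : ‖2 * quotFun α z - 1‖ < 1 := by
  refine norm_two_mul_quotFun_sub_one_lt_of_ball hα0 hα1 ?_ hz1 hz.le fun w hw =>
    (norm_two_mul_quotFun_sub_one_lt_of_norm_lt_one hα0 hα1 (hz ▸ hw)).le
  rintro rfl
  simp at hz

lemma one_sub_exp_mul_I (θ : ℝ) : 1 - Complex.exp (θ * Complex.I) =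
    ((2 * Real.sin (θ / 2) : ℝ) : ℂ) * Complex.exp (((θ - Real.pi) / 2 : ℝ) * Complex.I) := by
  have h1 : (((θ - Real.pi) / 2 : ℝ) : ℂ) * Complex.I =
      (θ / 2 : ℂ) * Complex.I - Real.pi / 2 * Complex.I := by
    push_cast
    ring
  have h2 : (θ : ℂ) * Complex.I = (θ / 2 : ℂ) * Complex.I + (θ / 2 : ℂ) * Complex.I := by ring
  have h3 : Complex.exp ((θ / 2 : ℂ) * Complex.I) * Complex.exp (-(θ / 2 : ℂ) * Complex.I) = 1 := by
    rw [← Complex.exp_add]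
    simp
  rw [h1, Complex.exp_sub, Complex.exp_pi_div_two_mul_I, h2, Complex.exp_add]
  push_cast
  rw [Complex.sin, Complex.div_I]
  linear_combination (-1 : ℂ) * h3 + (Complex.exp ((θ / 2 : ℂ) * Complex.I) *
    Complex.exp (-(θ / 2 : ℂ) * Complex.I) -
      Complex.exp ((θ / 2 : ℂ) * Complex.I) ^ 2) * Complex.I_sq

lemma sin_half_pos {θ : ℝ} (hθ : θ ∈ Set.Ioo 0 (2 * Real.pi)) : 0 < 2 * Real.sin (θ / 2) :=
  mul_pos two_pos (Real.sin_pos_of_pos_of_lt_pi (by linarith [hθ.1]) (by linarith [hθ.2]))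

lemma log_one_sub_exp_mul_I {θ : ℝ} (hθ : θ ∈ Set.Ioo 0 (2 * Real.pi)) :
    Complex.log (1 - Complex.exp (θ * Complex.I)) =
      Real.log (2 * Real.sin (θ / 2)) + ((θ - Real.pi) / 2 : ℝ) * Complex.I := by
  have hpi := Real.pi_pos
  rw [one_sub_exp_mul_I, Complex.log_ofReal_mul (sin_half_pos hθ) (Complex.exp_ne_zero _),
    Complex.log_exp]
  · simp
    linarith [hθ.1]
  · simp
    linarith [hθ.2]

lemma exp_mul_I_ne_one {θ : ℝ} (hθ : θ ∈ Set.Ioo 0 (2 * Real.pi)) :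
    Complex.exp (θ * Complex.I) ≠ 1 := by
  intro h
  have h1 := one_sub_exp_mul_I θ
  rw [h, sub_self] at h1
  exact mul_ne_zero (Complex.ofReal_ne_zero.mpr (sin_half_pos hθ).ne') (Complex.exp_ne_zero _)
    h1.symm

lemma exp_mul_I_mem_cutPlane {θ : ℝ} (hθ : θ ∈ Set.Ioo 0 (2 * Real.pi)) :
    Complex.exp (θ * Complex.I) ∈ cutPlane :=
  mem_cutPlane_of_norm_le_one (Complex.norm_exp_ofReal_mul_I θ).le (exp_mul_I_ne_one hθ)

lemma quotFun_exp_re_pos {α : ℝ} (hα0 : 0 < α) (hα1 : α < 1) {θ : ℝ}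
    (hθ : θ ∈ Set.Ioo 0 (2 * Real.pi)) : 0 < (quotFun α (Complex.exp (θ * Complex.I))).re := by
  have h := norm_two_mul_quotFun_sub_one_lt hα0 hα1 (Complex.norm_exp_ofReal_mul_I θ)
    (exp_mul_I_ne_one hθ)
  have h2 := (Complex.abs_re_le_norm _).trans_lt h
  rw [abs_lt] at h2
  simp at h2
  linarith [h2.1]

/-- The continuous determination of `arg (z h_α'(z))` along `z = e^{iθ}`. -/
noncomputable def liftArg (α θ : ℝ) : ℝ :=
  θ + (3 - 2 * α) * ((Real.pi - θ) / 2) + (quotFun α (Complex.exp (θ * Complex.I))).arg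

lemma hasDerivAt_liftArg {α : ℝ} (hα0 : 0 < α) (hα1 : α < 1) {θ : ℝ}
    (hθ : θ ∈ Set.Ioo 0 (2 * Real.pi)) :
    HasDerivAt (liftArg α) ((quotFun α (Complex.exp (θ * Complex.I)))⁻¹.re - 1) θ := by
  have hpos := quotFun_exp_re_pos hα0 hα1 hθ
  have hmem := exp_mul_I_mem_cutPlane hθ
  have hode := mul_deriv_quotFun hα1 hmem
  have hm := re_div_one_sub (exp_mul_I_ne_one hθ)
  have hexp : HasDerivAt (fun t : ℝ => Complex.exp (t * Complex.I))
      (Complex.exp (θ * Complex.I) * Complex.I) θ := by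
    have h := ((hasDerivAt_id (θ : ℂ)).mul_const Complex.I).cexp.comp_ofReal
    simpa using h
  have hq := (differentiableAt_quotFun α hmem).hasDerivAt.comp_of_eq θ hexp rfl
  have hlog := hq.clog_real (Or.inl hpos)
  have harg := (Complex.imCLM.hasFDerivAt.comp_hasDerivAt θ hlog)
  have hlin : HasDerivAt (fun t : ℝ => t + (3 - 2 * α) * ((Real.pi - t) / 2))
      (1 + (3 - 2 * α) * (-1 / 2)) θ :=
    (hasDerivAt_id θ).add ((((hasDerivAt_id θ).const_sub Real.pi).div_const 2).const_mul _)
  have hsum := hlin.add harg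
  have hfun : liftArg α = (fun t : ℝ => t + (3 - 2 * α) * ((Real.pi - t) / 2)) +
      (Complex.imCLM ∘ fun t : ℝ => Complex.log
        ((quotFun α ∘ fun t : ℝ => Complex.exp (t * Complex.I)) t)) := by
    funext t
    simp [liftArg, Complex.log_im]
  rw [hfun]
  refine hsum.congr_deriv ?_
  have hg : quotFun α (Complex.exp (θ * Complex.I)) ≠ 0 := by
    intro h
    simp [h] at hpos
  rw [Complex.norm_exp_ofReal_mul_I] at hm
  simp only [Function.comp, Complex.imCLM_apply]
  set g := quotFun α (Complex.exp (θ * Complex.I))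
  set z := Complex.exp (θ * Complex.I)
  have hquot : deriv (quotFun α) z * (z * Complex.I) / g =
      (g⁻¹ - 2 - ((3 - 2 * α : ℝ) : ℂ) * (z / (1 - z))) * Complex.I := by
    rw [div_eq_iff hg]
    linear_combination Complex.I * hode - Complex.I * (inv_mul_cancel₀ hg)
  have h2 : (2 : ℂ).re = 2 := rfl
  rw [hquot, Complex.mul_I_im, Complex.sub_re, Complex.sub_re, Complex.re_ofReal_mul, hm, h2]
  ring

lemma strictMonoOn_liftArg {α : ℝ} (hα0 : 0 < α) (hα1 : α < 1) :
    StrictMonoOn (liftArg α) (Set.Ioo 0 (2 * Real.pi)) := by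
  refine strictMonoOn_of_deriv_pos (convex_Ioo _ _)
    (fun θ hθ => (hasDerivAt_liftArg hα0 hα1 hθ).continuousAt.continuousWithinAt) fun θ hθ => ?_
  rw [interior_Ioo] at hθ
  have hpos := quotFun_exp_re_pos hα0 hα1 hθ
  have hg : quotFun α (Complex.exp (θ * Complex.I)) ≠ 0 := by
    intro h
    simp [h] at hpos
  have h := norm_two_mul_quotFun_sub_one_lt hα0 hα1 (Complex.norm_exp_ofReal_mul_I θ)
    (exp_mul_I_ne_one hθ)
  rw [(hasDerivAt_liftArg hα0 hα1 hθ).deriv, re_inv_of_ne_zero hg, add_sub_cancel_left]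
  have hn : 0 < ‖quotFun α (Complex.exp (θ * Complex.I))‖ := norm_pos_iff.mpr hg
  refine div_pos ?_ (by positivity)
  nlinarith [norm_nonneg (2 * quotFun α (Complex.exp (θ * Complex.I)) - 1)]

lemma two_cpow_ofReal (c : ℝ) : (2 : ℂ) ^ (c : ℂ) = ((2 ^ c : ℝ) : ℂ) := by
  rw [Complex.ofReal_cpow zero_le_two]
  simp

lemma kfun_neg_one_im (α : ℝ) : (kfun α (-1)).im = 0 := by
  have h2 : (1 - -1 : ℂ) = 2 := by norm_num
  by_cases h : α = 1 / 2
  · have hlog : Complex.log 2 = ((Real.log 2 : ℝ) : ℂ) := by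
      rw [Complex.ofReal_log zero_le_two]
      simp
    rw [kfun, if_pos h, h2, hlog, Complex.neg_im, Complex.ofReal_im, neg_zero]
  · rw [kfun, if_neg h, h2, two_cpow_ofReal, ← Complex.ofReal_one, ← Complex.ofReal_sub,
      ← Complex.ofReal_div, Complex.ofReal_im]

lemma quotFun_neg_one_im (α : ℝ) : (quotFun α (-1)).im = 0 := by
  have h2 : (1 - -1 : ℂ) = 2 := by norm_num
  have hne : (-1 : ℂ) ≠ 1 := by norm_num
  have h := hfun_add_mul_deriv α (mem_cutPlane_of_norm_le_one (z := -1) (by simp) hne)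
  have hk := mul_hfun α (-1)
  rw [h2, two_cpow_ofReal] at h
  have hd : deriv (hfun α) (-1) = -kfun α (-1) - ((2 ^ (2 * α - 2) : ℝ) : ℂ) := by
    linear_combination -h - hk
  have hc : (2 - 2 * α : ℂ) = ((2 - 2 * α : ℝ) : ℂ) := by
    push_cast
    ring
  rw [quotFun, h2, two_cpow_ofReal, hc, Complex.div_ofReal_im, Complex.im_mul_ofReal, hd,
    Complex.sub_im, Complex.neg_im, kfun_neg_one_im, Complex.ofReal_im]
  simp

lemma liftArg_pi {α : ℝ} (hα0 : 0 < α) (hα1 : α < 1) : liftArg α Real.pi = Real.pi := by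
  have hpi := Real.pi_pos
  have hpos := quotFun_exp_re_pos hα0 hα1 (θ := Real.pi) ⟨hpi, by linarith⟩
  rw [Complex.exp_pi_mul_I] at hpos
  have harg : (quotFun α (-1)).arg = 0 :=
    Complex.arg_eq_zero_iff.mpr ⟨hpos.le, quotFun_neg_one_im α⟩
  simp [liftArg, Complex.exp_pi_mul_I, harg]

open Filter Topology in
lemma tendsto_log_mul_self : Tendsto (fun w : ℂ => Complex.log w * w) (𝓝 0) (𝓝 0) := by
  have hbound : Tendsto (fun w : ℂ => |‖w‖ * Real.log ‖w‖| + Real.pi * ‖w‖) (𝓝 0) (𝓝 0) := by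
    have hcont : Continuous fun w : ℂ => |‖w‖ * Real.log ‖w‖| + Real.pi * ‖w‖ :=
      (Real.continuous_mul_log.comp continuous_norm).abs.add (by fun_prop)
    simpa using hcont.tendsto 0
  refine squeeze_zero_norm (fun w => ?_) hbound
  have h1 : ‖Complex.log w‖ ≤ |Real.log ‖w‖| + Real.pi := by
    refine (Complex.norm_le_abs_re_add_abs_im _).trans ?_
    rw [Complex.log_re, Complex.log_im]
    gcongr
    exact Complex.abs_arg_le_pi w
  rw [norm_mul, abs_mul, abs_norm]
  nlinarith [norm_nonneg w]

open Filter Topology in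
lemma tendsto_cpow_nhds_zero {c : ℝ} (hc : 0 < c) :
    Tendsto (fun w : ℂ => w ^ (c : ℂ)) (𝓝 0) (𝓝 0) := by
  refine squeeze_zero_norm (fun w => (Complex.norm_cpow_real w c).le) ?_
  have := ((Real.continuous_rpow_const hc.le).comp (continuous_norm (E := ℂ))).tendsto 0
  simpa [Function.comp_def, Real.zero_rpow hc.ne'] using this

open Filter Topology in
lemma tendsto_kfun_one_sub_mul_cpow {α : ℝ} (hα1 : α < 1) :
    Tendsto (fun w : ℂ => kfun α (1 - w) * w ^ ((2 - 2 * α : ℝ) : ℂ)) (𝓝[≠] 0) (𝓝 0) := by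
  by_cases h : α = 1 / 2
  · have heq : (fun w : ℂ => kfun α (1 - w) * w ^ ((2 - 2 * α : ℝ) : ℂ)) =
        fun w => -(Complex.log w * w) := by
      funext w
      rw [kfun, if_pos h, h]
      norm_num
    rw [heq]
    simpa using tendsto_log_mul_self.neg.mono_left nhdsWithin_le_nhds
  · have hlim : Tendsto (fun w : ℂ => (w - w ^ ((2 - 2 * α : ℝ) : ℂ)) / ((1 - 2 * α : ℝ) : ℂ))
        (𝓝[≠] 0) (𝓝 ((0 - 0) / ((1 - 2 * α : ℝ) : ℂ))) :=
      ((tendsto_id.sub (tendsto_cpow_nhds_zero (by linarith))).div_const _).mono_left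
        nhdsWithin_le_nhds
    rw [sub_zero, zero_div] at hlim
    refine hlim.congr' ?_
    filter_upwards [self_mem_nhdsWithin] with w hw
    have hprod : w ^ ((2 * α - 1 : ℝ) : ℂ) * w ^ ((2 - 2 * α : ℝ) : ℂ) = w := by
      rw [← Complex.cpow_add _ _ hw, ← Complex.ofReal_add]
      ring_nf
      simp
    rw [kfun, if_neg h, sub_sub_cancel, div_mul_eq_mul_div, sub_mul, hprod, one_mul]

/-- On the unit circle, `h_α' / k_α''` is `(1 - z) / ((2 - 2α) z)` times a factor tending to `1`
as `z → 1`. -/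
lemma quotFun_exp_eq {α : ℝ} (hα1 : α < 1) {θ : ℝ} (hθ : θ ∈ Set.Ioo 0 (2 * Real.pi)) :
    quotFun α (Complex.exp (θ * Complex.I)) =
      ((2 * Real.sin (θ / 2) / (2 - 2 * α) : ℝ) : ℂ) *
        ((1 - kfun α (1 - (1 - Complex.exp (θ * Complex.I))) *
          (1 - Complex.exp (θ * Complex.I)) ^ ((2 - 2 * α : ℝ) : ℂ) *
            Complex.exp (-(θ * Complex.I))) *
              Complex.exp (((θ - Real.pi) / 2 : ℝ) * Complex.I) *
                Complex.exp (-(θ * Complex.I))) := by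
  have hmem := exp_mul_I_mem_cutPlane hθ
  have h0 := two_sub_two_mul_ne_zero hα1
  have hsub := one_sub_exp_mul_I θ
  have h1 := hfun_add_mul_deriv α hmem
  have h2 := mul_hfun α (Complex.exp (θ * Complex.I))
  have h3 := one_sub_cpow_mul_cpow_neg hmem (a := 2 * α - 2) (b := 2 - 2 * α) (by ring)
  have h4 : (1 - Complex.exp (θ * Complex.I)) ^ ((3 - 2 * α : ℝ) : ℂ) =
      (1 - Complex.exp (θ * Complex.I)) ^ ((2 - 2 * α : ℝ) : ℂ) *
        (1 - Complex.exp (θ * Complex.I)) := by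
    rw [show (3 - 2 * α : ℝ) = (2 - 2 * α) + 1 by ring, Complex.ofReal_add, Complex.ofReal_one,
      Complex.cpow_add _ _ (one_sub_ne_zero_of_mem_cutPlane hmem), Complex.cpow_one]
  have h5 : Complex.exp (θ * Complex.I) * Complex.exp (-(θ * Complex.I)) = 1 := by
    rw [← Complex.exp_add]
    simp
  have hc : ((2 * Real.sin (θ / 2) / (2 - 2 * α) : ℝ) : ℂ) =
      ((2 * Real.sin (θ / 2) : ℝ) : ℂ) / (2 - 2 * α : ℂ) := by
    push_cast
    ring
  rw [quotFun, h4, hc, sub_sub_cancel]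
  set z := Complex.exp (θ * Complex.I)
  set y := Complex.exp (-(θ * Complex.I))
  set s := (1 - z) ^ ((2 - 2 * α : ℝ) : ℂ)
  set r := (1 - z) ^ ((2 * α - 2 : ℝ) : ℂ)
  set e := Complex.exp (((θ - Real.pi) / 2 : ℝ) * Complex.I)
  have hd : deriv (hfun α) z = (r - kfun α z * y) * y := by
    linear_combination y * h1 - y ^ 2 * h2 - (deriv (hfun α) z - hfun α z * y) * h5
  rw [hd, hsub]
  generalize (2 - 2 * α : ℂ) = c at h0 ⊢
  field_simp
  linear_combination ((2 * Real.sin (θ / 2) : ℝ) : ℂ) * e * y * h3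

open Filter Topology in
lemma tendsto_arg_quotFun_exp {α : ℝ} (hα1 : α < 1) :
    Tendsto (fun θ : ℝ => (quotFun α (Complex.exp (θ * Complex.I))).arg) (𝓝[>] 0)
      (𝓝 (-(Real.pi / 2))) := by
  have hpi := Real.pi_pos
  have hev : ∀ᶠ θ : ℝ in 𝓝[>] 0, θ ∈ Set.Ioo 0 (2 * Real.pi) :=
    Ioo_mem_nhdsGT (by positivity)
  have hw : Tendsto (fun θ : ℝ => 1 - Complex.exp (θ * Complex.I)) (𝓝[>] 0) (𝓝[≠] 0) := by
    refine tendsto_nhdsWithin_iff.mpr ⟨?_, ?_⟩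
    · have hcont : Continuous fun θ : ℝ => 1 - Complex.exp (θ * Complex.I) := by fun_prop
      simpa using (hcont.tendsto 0).mono_left (nhdsWithin_le_nhds (s := Set.Ioi 0))
    · filter_upwards [hev] with θ hθ
      exact one_sub_ne_zero_of_mem_cutPlane (exp_mul_I_mem_cutPlane hθ)
  have hy : Tendsto (fun θ : ℝ => Complex.exp (-(θ * Complex.I))) (𝓝[>] 0) (𝓝 1) := by
    have hcont : Continuous fun θ : ℝ => Complex.exp (-(θ * Complex.I)) := by fun_prop
    simpa using (hcont.tendsto 0).mono_left (nhdsWithin_le_nhds (s := Set.Ioi 0))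
  have he : Tendsto (fun θ : ℝ => Complex.exp (((θ - Real.pi) / 2 : ℝ) * Complex.I)) (𝓝[>] 0)
      (𝓝 (-Complex.I)) := by
    have hcont : Continuous fun θ : ℝ => Complex.exp (((θ - Real.pi) / 2 : ℝ) * Complex.I) := by
      fun_prop
    have h0 : Complex.exp (((0 - Real.pi) / 2 : ℝ) * Complex.I) = -Complex.I := by
      rw [← Complex.exp_neg_pi_div_two_mul_I]
      congr 1
      push_cast
      ring
    have := (hcont.tendsto 0).mono_left (nhdsWithin_le_nhds (s := Set.Ioi 0))
    rwa [h0] at this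
  have hmain := ((tendsto_const_nhds (x := (1 : ℂ))).sub
    (((tendsto_kfun_one_sub_mul_cpow hα1).comp hw).mul hy)).mul he |>.mul hy
  have hval : (1 - 0 * 1) * -Complex.I * 1 = -Complex.I := by ring
  rw [hval] at hmain
  have harg := (Complex.continuousAt_arg (x := -Complex.I) (by
    simp [Complex.mem_slitPlane_iff])).tendsto.comp hmain
  rw [Complex.arg_neg_I] at harg
  refine harg.congr' ?_
  filter_upwards [hev] with θ hθ
  rw [quotFun_exp_eq hα1 hθ, Complex.arg_real_mul _ (div_pos (sin_half_pos hθ) (by linarith))]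
  rfl

open Filter Topology in
lemma tendsto_liftArg {α : ℝ} (hα1 : α < 1) :
    Tendsto (liftArg α) (𝓝[>] 0) (𝓝 ((1 - α) * Real.pi)) := by
  have hcont : Continuous fun θ : ℝ => θ + (3 - 2 * α) * ((Real.pi - θ) / 2) := by fun_prop
  have h := ((hcont.tendsto 0).mono_left (nhdsWithin_le_nhds (s := Set.Ioi 0))).add
    (tendsto_arg_quotFun_exp hα1)
  rw [show (1 - α) * Real.pi =
    0 + (3 - 2 * α) * ((Real.pi - 0) / 2) + -(Real.pi / 2) by ring]
  exact h

lemma Ioc_zero_pi_subset : Set.Ioc 0 Real.pi ⊆ Set.Ioo 0 (2 * Real.pi) :=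
  fun _ hθ => ⟨hθ.1, by linarith [hθ.2, Real.pi_pos]⟩

lemma lt_liftArg {α : ℝ} (hα0 : 0 < α) (hα1 : α < 1) {θ : ℝ}
    (hθ : θ ∈ Set.Ioo 0 (2 * Real.pi)) : (1 - α) * Real.pi < liftArg α θ := by
  have hhalf : θ / 2 ∈ Set.Ioo 0 (2 * Real.pi) := ⟨by linarith [hθ.1], by linarith [hθ.1, hθ.2]⟩
  refine lt_of_le_of_lt (le_of_tendsto (tendsto_liftArg hα1) ?_)
    (strictMonoOn_liftArg hα0 hα1 hhalf hθ (by linarith [hθ.1]))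
  filter_upwards [Ioo_mem_nhdsGT hhalf.1] with t ht
  exact (strictMonoOn_liftArg hα0 hα1 ⟨ht.1, ht.2.trans hhalf.2⟩ hhalf ht.2).le

lemma liftArg_le_pi {α : ℝ} (hα0 : 0 < α) (hα1 : α < 1) {θ : ℝ}
    (hθ : θ ∈ Set.Ioc 0 Real.pi) : liftArg α θ ≤ Real.pi := by
  have h := (strictMonoOn_liftArg hα0 hα1).monotoneOn (Ioc_zero_pi_subset hθ)
    (Ioc_zero_pi_subset ⟨Real.pi_pos, le_rfl⟩) hθ.2
  rwa [liftArg_pi hα0 hα1] at h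

lemma phiFun_eq_liftArg {α : ℝ} (hα0 : 0 < α) (hα1 : α < 1) {θ : ℝ}
    (hθ : θ ∈ Set.Ioc 0 Real.pi) : phiFun α θ = liftArg α θ := by
  have hθ' := Ioc_zero_pi_subset hθ
  have hpos := quotFun_exp_re_pos hα0 hα1 hθ'
  have hg : quotFun α (Complex.exp (θ * Complex.I)) ≠ 0 := by
    intro h
    simp [h] at hpos
  have hmem := exp_mul_I_mem_cutPlane hθ'
  have hz1 := one_sub_ne_zero_of_mem_cutPlane hmem
  have h0 := two_sub_two_mul_ne_zero hα1
  have hα : 0 < 2 - 2 * α := by linarith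
  set w : ℂ := Real.log (2 - 2 * α) + Complex.log (quotFun α (Complex.exp (θ * Complex.I))) +
    Complex.log (1 - Complex.exp (θ * Complex.I)) * ((2 * α - 3 : ℝ) : ℂ) with hw
  have hexp : deriv (hfun α) (Complex.exp (θ * Complex.I)) = Complex.exp w := by
    have h3 := one_sub_cpow_mul_cpow_neg hmem (a := 2 * α - 3) (b := 3 - 2 * α) (by ring)
    rw [hw, Complex.exp_add, Complex.exp_add, Complex.exp_log hg, ← Complex.ofReal_exp,
      Real.exp_log hα, ← Complex.cpow_def_of_ne_zero hz1, quotFun]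
    have hc : ((2 - 2 * α : ℝ) : ℂ) = 2 - 2 * α := by
      push_cast
      ring
    rw [hc]
    generalize (2 - 2 * α : ℂ) = c at h0 ⊢
    field_simp
    linear_combination -(deriv (hfun α) (Complex.exp (θ * Complex.I))) * h3
  have him : w.im = liftArg α θ - θ := by
    rw [hw, log_one_sub_exp_mul_I hθ', liftArg, Complex.add_im, Complex.add_im,
      Complex.im_mul_ofReal, Complex.log_im]
    simp only [Complex.add_im, Complex.ofReal_im, Complex.mul_I_im, Complex.ofReal_re]
    ring
  have hlt := lt_liftArg hα0 hα1 hθ'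
  have hle := liftArg_le_pi hα0 hα1 hθ
  have hlow : 0 < (1 - α) * Real.pi := mul_pos (by linarith) Real.pi_pos
  rw [phiFun, hexp, ← Complex.log_im, Complex.log_exp (by linarith [hθ.2]) (by linarith [hθ.1]),
    him]
  ring

/-- for `0 < α < 1`, the function `φ_α(θ) = θ + arg h_α'(e^{iθ})` is a continuous,
strictly increasing bijection from `(0, π]` onto `((1-α)π, π]`. -/
theorem phiFun_bijOn (α : ℝ) (hα0 : 0 < α) (hα1 : α < 1) :
    ContinuousOn (phiFun α) (Set.Ioc 0 Real.pi) ∧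
    StrictMonoOn (phiFun α) (Set.Ioc 0 Real.pi) ∧
    Set.BijOn (phiFun α) (Set.Ioc 0 Real.pi) (Set.Ioc ((1 - α) * Real.pi) Real.pi) := by
  have heq : Set.EqOn (phiFun α) (liftArg α) (Set.Ioc 0 Real.pi) :=
    fun θ hθ => phiFun_eq_liftArg hα0 hα1 hθ
  have hcont : ContinuousOn (liftArg α) (Set.Ioc 0 Real.pi) := fun θ hθ =>
    (hasDerivAt_liftArg hα0 hα1 (Ioc_zero_pi_subset hθ)).continuousAt.continuousWithinAt
  have hmono : StrictMonoOn (liftArg α) (Set.Ioc 0 Real.pi) :=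
    (strictMonoOn_liftArg hα0 hα1).mono Ioc_zero_pi_subset
  refine ⟨hcont.congr heq, hmono.congr heq.symm, Set.BijOn.congr ⟨?_, hmono.injOn, ?_⟩ heq.symm⟩
  · exact fun θ hθ => ⟨lt_liftArg hα0 hα1 (Ioc_zero_pi_subset hθ), liftArg_le_pi hα0 hα1 hθ⟩
  · intro y hy
    obtain ⟨θ, hθy, hθ⟩ := (((tendsto_liftArg hα1).eventually_lt_const hy.1).and
      (Ioo_mem_nhdsGT Real.pi_pos)).exists
    have hsub : Set.Icc θ Real.pi ⊆ Set.Ioc 0 Real.pi := fun t ht => ⟨hθ.1.trans_le ht.1, ht.2⟩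
    obtain ⟨t, ht, hty⟩ := intermediate_value_Icc hθ.2.le (hcont.mono hsub)
      ⟨hθy.le, (liftArg_pi hα0 hα1).symm ▸ hy.2⟩
    exact ⟨t, hsub ht, hty⟩
end

section
/- For the class K(0) of normalized convex functions: (a) inf over all f ∈ K(0) and z ∈ 𝔻 \ {0} of Re(f(z)/z) equals 1/2; (b) for every t with 0 < t ≤ π, the set {Re(e^{it}·f(z)/z) : f ∈ K(0), z ∈ 𝔻 \ {0}} is not bounded below (i.e., Q_0(t) = −∞). -/
open Complex Metric Set Filter Topology

/-- If `w` is analytic on the disk, `w 0 = 0` and `‖w‖` reaches `1`, then it does so at a point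
`z₀` such that `w` obeys the Schwarz bound on the closed disk of radius `‖z₀‖`. -/
lemma exists_norm_eq_one_and_schwarz {w : ℂ → ℂ} (hw : DifferentiableOn ℂ w (ball 0 1))
    (hw0 : w 0 = 0) {z₁ : ℂ} (hz₁ : z₁ ∈ ball (0 : ℂ) 1) (h₁ : 1 ≤ ‖w z₁‖) :
    ∃ z₀ ∈ ball (0 : ℂ) 1, z₀ ≠ 0 ∧ ‖w z₀‖ = 1 ∧
      ∀ z, ‖z‖ ≤ ‖z₀‖ → ‖w z‖ ≤ ‖z‖ / ‖z₀‖ := by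
  have hsub : closedBall (0 : ℂ) ‖z₁‖ ⊆ ball 0 1 :=
    closedBall_subset_ball (by simpa using hz₁)
  have hcont : ContinuousOn (fun z => ‖w z‖) (closedBall (0 : ℂ) ‖z₁‖) :=
    (hw.continuousOn.mono hsub).norm
  have hcomp : IsCompact (closedBall (0 : ℂ) ‖z₁‖ ∩ (fun z => ‖w z‖) ⁻¹' Ici 1) :=
    (isCompact_closedBall _ _).of_isClosed_subset
      (hcont.preimage_isClosed_of_isClosed isClosed_closedBall isClosed_Ici) inter_subset_left
  obtain ⟨z₀, ⟨hz₀, hwz₀⟩, hmin⟩ := hcomp.exists_isMinOn ⟨z₁, by simp, h₁⟩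
    (continuous_norm.continuousOn)
  have hwz₀ : 1 ≤ ‖w z₀‖ := hwz₀
  have hne : z₀ ≠ 0 := by
    rintro rfl
    simp [hw0] at hwz₀
    linarith
  have hpos : 0 < ‖z₀‖ := norm_pos_iff.2 hne
  have hz₀le : ‖z₀‖ ≤ ‖z₁‖ := by simpa using hz₀
  have hball : z₀ ∈ ball (0 : ℂ) 1 := hsub hz₀
  have hlt : ∀ z ∈ ball (0 : ℂ) ‖z₀‖, ‖w z‖ < 1 := by
    intro z hz
    by_contra! hcon
    have hz' : ‖z‖ < ‖z₀‖ := by simpa using hz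
    have : ‖z₀‖ ≤ ‖z‖ := hmin ⟨by simpa using (hz'.le.trans hz₀le), hcon⟩
    linarith
  have hsub₀ : closedBall (0 : ℂ) ‖z₀‖ ⊆ ball 0 1 :=
    closedBall_subset_ball (by simpa using hball)
  have hschwarz : ∀ z ∈ ball (0 : ℂ) ‖z₀‖, ‖w z‖ ≤ ‖z‖ / ‖z₀‖ := by
    intro z hz
    have := Complex.dist_le_div_mul_dist_of_mapsTo_ball (f := w) (c := 0) (R₁ := ‖z₀‖) (R₂ := 1)
      (z := z) (hw.mono (ball_subset_closedBall.trans hsub₀))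
      (fun y hy => by simpa [hw0] using (hlt y hy).le) hz
    simpa [hw0, div_eq_inv_mul] using this
  have hclosed : ∀ z, ‖z‖ ≤ ‖z₀‖ → ‖w z‖ ≤ ‖z‖ / ‖z₀‖ := by
    intro z hz
    have hcl : closure (ball (0 : ℂ) ‖z₀‖) = closedBall 0 ‖z₀‖ := closure_ball _ hpos.ne'
    refine le_on_closure (f := fun z => ‖w z‖) (g := fun z => ‖z‖ / ‖z₀‖) hschwarz
      ?_ ?_ (x := z) ?_
    · rw [hcl]; exact (hw.continuousOn.mono hsub₀).norm
    · fun_prop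
    · rw [hcl]; simpa using hz
  refine ⟨z₀, hball, hne, le_antisymm ?_ hwz₀, hclosed⟩
  simpa [hpos.ne'] using hclosed z₀ le_rfl

/-- Jack's lemma. -/
lemma exists_mul_deriv_eq_of_one_le_norm {w : ℂ → ℂ} (hw : DifferentiableOn ℂ w (ball 0 1))
    (hw0 : w 0 = 0) {z₁ : ℂ} (hz₁ : z₁ ∈ ball (0 : ℂ) 1) (h₁ : 1 ≤ ‖w z₁‖) :
    ∃ z₀ ∈ ball (0 : ℂ) 1, ‖w z₀‖ = 1 ∧ ∃ k : ℝ, 1 ≤ k ∧ z₀ * deriv w z₀ = k * w z₀ := by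
  obtain ⟨z₀, hz₀, hne, hnorm, hle⟩ := exists_norm_eq_one_and_schwarz hw hw0 hz₁ h₁
  have hpos : 0 < ‖z₀‖ := norm_pos_iff.2 hne
  have hconj : (starRingEnd ℂ) (w z₀) * w z₀ = 1 := by
    rw [mul_comm, Complex.mul_conj, Complex.normSq_eq_norm_sq, hnorm]; simp
  set c : ℂ := (starRingEnd ℂ) (w z₀) * (z₀ * deriv w z₀) with hc
  have hderiv : ∀ d : ℂ, HasDerivAt
      (fun s : ℝ => ((starRingEnd ℂ) (w z₀) * w (z₀ * exp (s * d)) - exp (s * d.re)).re)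
      ((c * d).re - d.re) 0 := by
    intro d
    have hwd : HasDerivAt w (deriv w z₀) (z₀ * exp ((0 : ℂ) * d)) := by
      simpa using (hw.differentiableAt (isOpen_ball.mem_nhds hz₀)).hasDerivAt
    have hexp : ∀ a : ℂ, HasDerivAt (fun s : ℂ => exp (s * a)) a 0 := by
      intro a
      simpa using ((hasDerivAt_id (0 : ℂ)).mul_const a).cexp
    have hin : HasDerivAt (fun s : ℂ => z₀ * exp (s * d)) (z₀ * d) 0 := (hexp d).const_mul z₀
    have := (((hwd.comp (0 : ℂ) hin).const_mul ((starRingEnd ℂ) (w z₀))).sub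
      (hexp d.re)).real_of_complex (z := 0)
    refine this.congr_deriv ?_
    rw [sub_re, ofReal_re, hc]
    congr 2
    ring
  have hbound : ∀ (d : ℂ) (s : ℝ), s * d.re ≤ 0 →
      ((starRingEnd ℂ) (w z₀) * w (z₀ * exp (s * d)) - exp (s * d.re)).re ≤ 0 := by
    intro d s hs
    have hn : ‖z₀ * exp (s * d)‖ = ‖z₀‖ * Real.exp (s * d.re) := by
      rw [norm_mul, Complex.norm_exp]; simp
    have h := hle (z₀ * exp (s * d)) (by
      rw [hn]
      exact mul_le_of_le_one_right hpos.le (Real.exp_le_one_iff.2 hs))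
    rw [hn, mul_div_cancel_left₀ _ hpos.ne'] at h
    have hre := Complex.re_le_norm ((starRingEnd ℂ) (w z₀) * w (z₀ * exp (s * d)))
    rw [norm_mul, RCLike.norm_conj, hnorm, one_mul] at hre
    have he : (exp ((s : ℂ) * d.re)).re = Real.exp (s * d.re) := by
      rw [← ofReal_mul, ← ofReal_exp, ofReal_re]
    rw [sub_re, he]
    linarith
  have him : c.im = 0 := by
    have hmax : IsLocalMax (fun s : ℝ =>
        ((starRingEnd ℂ) (w z₀) * w (z₀ * exp (s * I)) - exp (s * I.re)).re) 0 :=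
      Eventually.of_forall fun s => by
        refine (hbound I s (by simp)).trans_eq ?_
        simp [hconj]
    simpa using hmax.hasDerivAt_eq_zero (hderiv I)
  have hre : 1 ≤ c.re := by
    have hslope := (hasDerivAt_iff_tendsto_slope.1 (hderiv 1)).mono_left
      (nhdsWithin_mono (0 : ℝ) (fun s (hs : s < 0) => hs.ne) : 𝓝[<] (0 : ℝ) ≤ 𝓝[≠] 0)
    have hnonneg := ge_of_tendsto hslope (b := 0) (by
      filter_upwards [self_mem_nhdsWithin] with s hs
      have hs : s < 0 := hs
      have hb := hbound 1 s (by simpa using hs.le)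
      rw [slope_def_field]
      refine div_nonneg_of_nonpos ?_ (by linarith)
      refine (sub_le_sub_right hb _).trans_eq ?_
      simp [hconj])
    simpa using hnonneg
  refine ⟨z₀, hz₀, hnorm, c.re, hre, ?_⟩
  have hcre : (c.re : ℂ) = c := Complex.ext (by simp) (by simp [him])
  rw [hcre, hc]
  linear_combination (-(z₀ * deriv w z₀)) * hconj

lemma one_half_lt_re_of_norm_inv_sub_one_lt {g : ℂ} (hg : g ≠ 0) (h : ‖g⁻¹ - 1‖ < 1) :
    1 / 2 < g.re := by
  have h2 : ‖1 - g‖ < ‖g‖ := by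
    have : 1 - g = (g⁻¹ - 1) * g := by field_simp
    rw [this, norm_mul]
    exact mul_lt_of_lt_one_left (norm_pos_iff.2 hg) h
  have h3 : ‖1 - g‖ ^ 2 < ‖g‖ ^ 2 := by gcongr
  rw [← normSq_eq_norm_sq, ← normSq_eq_norm_sq, normSq_apply, normSq_apply] at h3
  simp at h3
  linarith

section Convex

variable {f : ℂ → ℂ}

lemma differentiableAt_dslope_and_deriv_eq (hf : DifferentiableOn ℂ f (ball 0 1)) (hf0 : f 0 = 0) {z : ℂ}
    (hz : z ∈ ball (0 : ℂ) 1) :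
    DifferentiableAt ℂ (dslope f 0) z ∧
      deriv f z = dslope f 0 z + z * deriv (dslope f 0) z := by
  have hg : DifferentiableOn ℂ (dslope f 0) (ball 0 1) :=
    (differentiableOn_dslope (isOpen_ball.mem_nhds (by simp))).2 hf
  have hgz := hg.differentiableAt (isOpen_ball.mem_nhds hz)
  refine ⟨hgz, ?_⟩
  have hfun : (fun z => z * dslope f 0 z) = f := by
    funext z
    simpa [hf0] using sub_smul_dslope f 0 z
  have h := (hasDerivAt_id' z).fun_mul hgz.hasDerivAt
  rw [hfun] at h
  simpa using h.deriv

/-- A convex function is starlike of order `1/2`, in the form `|f(z)/(z f'(z)) - 1| < 1`. -/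
lemma IsConvexOfOrder.norm_one_sub_dslope_div_deriv_lt (hf : IsConvexOfOrder 0 f) {z : ℂ}
    (hz : z ∈ ball (0 : ℂ) 1) : ‖1 - dslope f 0 z / deriv f z‖ < 1 := by
  obtain ⟨hd, hf0, hf1, hconv⟩ := hf
  have hd' : DifferentiableOn ℂ (deriv f) (ball 0 1) := hd.deriv isOpen_ball
  have hgd : ∀ z ∈ ball (0 : ℂ) 1, HasDerivAt (fun z => 1 - dslope f 0 z / deriv f z)
      (-((deriv (dslope f 0) z * deriv f z - dslope f 0 z * deriv (deriv f) z) / deriv f z ^ 2))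
      z := fun z hz =>
    ((differentiableAt_dslope_and_deriv_eq hd hf0 hz).1.hasDerivAt.div
      (hd'.differentiableAt (isOpen_ball.mem_nhds hz)).hasDerivAt (hconv z hz).1).const_sub 1
  by_contra! hcon
  obtain ⟨z₀, hz₀, hnorm, k, hk, hkw⟩ := exists_mul_deriv_eq_of_one_le_norm
    (w := fun z => 1 - dslope f 0 z / deriv f z)
    (fun z hz => (hgd z hz).differentiableAt.differentiableWithinAt)
    (by simp [hf1]) hz hcon
  obtain ⟨hne, hP⟩ := hconv z₀ hz₀
  have hrel := (differentiableAt_dslope_and_deriv_eq hd hf0 hz₀).2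
  rw [(hgd z₀ hz₀).deriv] at hkw
  set w := 1 - dslope f 0 z₀ / deriv f z₀ with hw
  set P := 1 + z₀ * deriv (deriv f) z₀ / deriv f z₀ with hPdef
  have hPw : P * (1 - w) = 1 + k * w := by
    rw [← hkw, hPdef, hw]
    field_simp
    linear_combination (-deriv f z₀) * hrel
  have hsq : w.re * w.re + w.im * w.im = 1 := by
    rw [← normSq_apply, normSq_eq_norm_sq, hnorm, one_pow]
  have hR := congrArg re hPw
  have hI := congrArg im hPw
  simp at hR hI
  have hx : w.re ≤ 1 := by nlinarith [sq_nonneg w.im]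
  have key : P.re * (2 * (1 - w.re)) = (1 - k) * (1 - w.re) := by
    linear_combination (1 - w.re) * hR - w.im * hI - (P.re + k) * hsq
  have hx1 : w.re = 1 := by
    by_contra hne1
    have : 0 < 1 - w.re := by
      rcases hx.lt_or_eq with h | h
      · linarith
      · exact absurd h hne1
    nlinarith [mul_pos hP this]
  have hy : w.im = 0 := by
    rw [hx1] at hsq
    nlinarith
  rw [hx1, hy] at hR
  simp at hR
  linarith

/-- The Marx–Strohhäcker inequality. -/
lemma IsConvexOfOrder.one_half_lt_re_dslope (hf : IsConvexOfOrder 0 f) {z : ℂ}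
    (hz : z ∈ ball (0 : ℂ) 1) : 1 / 2 < (dslope f 0 z).re := by
  have hstar := fun z hz => hf.norm_one_sub_dslope_div_deriv_lt (z := z) hz
  obtain ⟨hd, hf0, hf1, hconv⟩ := hf
  have hg : ∀ z ∈ ball (0 : ℂ) 1, dslope f 0 z ≠ 0 := by
    intro z hz h0
    have := hstar z hz
    simp [h0] at this
  have hgd : ∀ z ∈ ball (0 : ℂ) 1, HasDerivAt (fun z => (dslope f 0 z)⁻¹ - 1)
      (-deriv (dslope f 0) z / dslope f 0 z ^ 2) z := fun z hz =>
    ((differentiableAt_dslope_and_deriv_eq hd hf0 hz).1.hasDerivAt.fun_inv (hg z hz)).sub_const 1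
  refine one_half_lt_re_of_norm_inv_sub_one_lt (hg z hz) ?_
  by_contra! hcon
  obtain ⟨z₀, hz₀, hnorm, k, hk, hkw⟩ := exists_mul_deriv_eq_of_one_le_norm
    (w := fun z => (dslope f 0 z)⁻¹ - 1)
    (fun z hz => (hgd z hz).differentiableAt.differentiableWithinAt)
    (by simp [hf1]) hz hcon
  have hrel := (differentiableAt_dslope_and_deriv_eq hd hf0 hz₀).2
  have hs := hstar z₀ hz₀
  have hne := (hconv z₀ hz₀).1
  have hgne := hg z₀ hz₀
  rw [(hgd z₀ hz₀).deriv] at hkw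
  set g := dslope f 0 z₀ with hgdef
  set v := g⁻¹ - 1 with hv
  have h1 : (1 - g / deriv f z₀) * (1 + (1 - k) * v) = -(k * v) := by
    have hq : 1 + (1 - k) * v = deriv f z₀ / g * g⁻¹ := by
      have : 1 + (1 - (k : ℂ)) * v = 1 + v - k * v := by ring
      rw [this, ← hkw, hv, hrel]
      field_simp
      ring
    have : (1 - g / deriv f z₀) * (deriv f z₀ / g * g⁻¹) = deriv f z₀ / g * g⁻¹ - g⁻¹ := by
      field_simp
    rw [hq, this, ← hq, hv]
    ring
  have h2 := congrArg norm h1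
  rw [norm_mul, norm_neg, norm_mul, hnorm, norm_real, Real.norm_of_nonneg (by linarith)] at h2
  have h3 : ‖1 + (1 - (k : ℂ)) * v‖ ≤ k := by
    refine (norm_add_le _ _).trans ?_
    rw [norm_mul, hnorm, norm_one, mul_one, ← ofReal_one, ← ofReal_sub, norm_real,
      Real.norm_of_nonpos (by linarith)]
    linarith
  nlinarith [mul_le_mul_of_nonneg_left h3 (norm_nonneg (1 - g / deriv f z₀))]

end Convex

lemma isConvexOfOrder_zero_div_one_sub : IsConvexOfOrder 0 (fun z => z / (1 - z)) := by
  have hne : ∀ z ∈ ball (0 : ℂ) 1, 1 - z ≠ 0 := by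
    intro z hz h
    have : z = 1 := (sub_eq_zero.1 h).symm
    simp [this] at hz
  have hd : ∀ z ∈ ball (0 : ℂ) 1,
      HasDerivAt (fun z : ℂ => z / (1 - z)) (1 / (1 - z) ^ 2) z := by
    intro z hz
    have := (hasDerivAt_id z).fun_div ((hasDerivAt_id z).const_sub 1) (hne z hz)
    simpa using this
  have hd2 : ∀ z ∈ ball (0 : ℂ) 1,
      HasDerivAt (deriv fun z : ℂ => z / (1 - z)) (2 / (1 - z) ^ 3) z := by
    intro z hz
    have h := (((hasDerivAt_id z).const_sub 1).fun_pow 2).fun_inv (pow_ne_zero 2 (hne z hz))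
    have h' : HasDerivAt (fun z : ℂ => 1 / (1 - z) ^ 2) (2 / (1 - z) ^ 3) z := by
      have h0 := hne z hz
      simp only [id, ← one_div] at h
      refine h.congr_deriv ?_
      push_cast
      field_simp
    refine h'.congr_of_eventuallyEq ?_
    filter_upwards [isOpen_ball.mem_nhds hz] with y hy
    exact (hd y hy).deriv
  refine ⟨fun z hz => (hd z hz).differentiableAt.differentiableWithinAt, by simp, ?_, ?_⟩
  · rw [(hd 0 (by simp)).deriv]; simp
  · intro z hz
    have hz' : z ∈ ball (0 : ℂ) 1 := hz
    have h0 := hne z hz'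
    rw [(hd2 z hz').deriv, (hd z hz').deriv]
    refine ⟨one_div_ne_zero (pow_ne_zero 2 h0), ?_⟩
    have : 1 + z * (2 / (1 - z) ^ 3) / (1 / (1 - z) ^ 2) = (1 + z) / (1 - z) := by
      field_simp
      ring
    rw [this, div_re, ← add_div]
    refine div_pos ?_ (normSq_pos.2 h0)
    have hn : normSq z < 1 := by
      rw [normSq_eq_norm_sq]
      have : ‖z‖ < 1 := by simpa using hz'
      nlinarith [norm_nonneg z]
    rw [normSq_apply] at hn
    simp
    linarith

/-- The half-plane mapping `z/(1-z)` realizes every value of `Re w > 1/2`, `w ≠ 1`. -/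
lemma exists_isConvexOfOrder_div_eq {w : ℂ} (hw : 1 / 2 < w.re) (hw1 : w ≠ 1) :
    ∃ f : ℂ → ℂ, IsConvexOfOrder 0 f ∧ ∃ z ∈ unitDisk, z ≠ 0 ∧ w = f z / z := by
  have hw0 : w ≠ 0 := by
    rintro rfl
    norm_num at hw
  have hz0 : 1 - w⁻¹ ≠ 0 := by
    rw [sub_ne_zero]
    intro h
    exact hw1 (inv_eq_one.1 h.symm)
  refine ⟨_, isConvexOfOrder_zero_div_one_sub, 1 - w⁻¹, ?_, hz0, ?_⟩
  · have h1 : ‖w - 1‖ < ‖w‖ := by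
      refine lt_of_pow_lt_pow_left₀ 2 (norm_nonneg _) ?_
      rw [← normSq_eq_norm_sq, ← normSq_eq_norm_sq, normSq_apply, normSq_apply]
      simp
      linarith
    have h2 : 1 - w⁻¹ = (w - 1) / w := by field_simp
    simpa [unitDisk, h2, div_lt_one (norm_pos_iff.2 hw0)] using h1
  · rw [div_right_comm, div_self hz0]
    simp

/-- for the class `K(0)`: (a) `inf Re(f(z)/z) = 1/2`;
(b) for `0 < t ≤ π` the set of values `Re(e^{it} f(z)/z)` is not bounded below. -/
theorem Qzero_values :
    sInf {x : ℝ | ∃ f : ℂ → ℂ, IsConvexOfOrder 0 f ∧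
        ∃ z ∈ unitDisk, z ≠ 0 ∧ x = (f z / z).re} = 1 / 2 ∧
    ∀ t : ℝ, 0 < t → t ≤ Real.pi →
      ¬ BddBelow {x : ℝ | ∃ f : ℂ → ℂ, IsConvexOfOrder 0 f ∧
        ∃ z ∈ unitDisk, z ≠ 0 ∧
          x = (Complex.exp ((t : ℂ) * Complex.I) * (f z / z)).re} := by
  constructor
  · have hmem : ∀ x : ℝ, 1 / 2 < x → x ≠ 1 → x ∈ {x : ℝ | ∃ f : ℂ → ℂ, IsConvexOfOrder 0 f ∧
        ∃ z ∈ unitDisk, z ≠ 0 ∧ x = (f z / z).re} := by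
      intro x hx hx1
      obtain ⟨f, hf, z, hz, hz0, h⟩ := exists_isConvexOfOrder_div_eq (w := (x : ℂ))
        (by simpa using hx) (by exact_mod_cast hx1)
      exact ⟨f, hf, z, hz, hz0, by rw [← h, ofReal_re]⟩
    refine csInf_eq_of_forall_ge_of_forall_gt_exists_lt ⟨2, hmem 2 (by norm_num) (by norm_num)⟩
      ?_ ?_
    · rintro x ⟨f, hf, z, hz, hz0, rfl⟩
      have h := hf.one_half_lt_re_dslope hz
      rw [dslope_of_ne _ hz0, slope_def_field, hf.2.1, sub_zero, sub_zero] at h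
      exact h.le
    · intro b hb
      obtain ⟨x, hx, hxb⟩ := exists_between (lt_min hb (by norm_num : (1 / 2 : ℝ) < 1))
      exact ⟨x, hmem x hx (hxb.trans_le (min_le_right _ _)).ne, hxb.trans_le (min_le_left _ _)⟩
  · rintro t ht htpi ⟨b, hb⟩
    have hbound : ∀ w : ℂ, 1 / 2 < w.re → w ≠ 1 →
        b ≤ Real.cos t * w.re - Real.sin t * w.im := by
      intro w hw hw1
      obtain ⟨f, hf, z, hz, hz0, h⟩ := exists_isConvexOfOrder_div_eq hw hw1
      have := hb ⟨f, hf, z, hz, hz0, rfl⟩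
      rwa [← h, mul_re, exp_ofReal_mul_I_re, exp_ofReal_mul_I_im] at this
    rcases htpi.lt_or_eq with htlt | rfl
    · have hsin : 0 < Real.sin t := Real.sin_pos_of_pos_of_lt_pi ht htlt
      have h := hbound ⟨2, (2 + |b|) / Real.sin t + 1⟩ (by norm_num)
        (fun h => by simpa using congrArg re h)
      simp only [mul_add, mul_div_cancel₀ _ hsin.ne'] at h
      linarith [Real.cos_le_one t, neg_abs_le b]
    · have h := hbound ⟨2 + |b|, 0⟩ (by have := abs_nonneg b; simp only; linarith)
        (fun h => by have := congrArg re h; simp at this; linarith [abs_nonneg b])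
      simp at h
      linarith [neg_abs_le b]
end
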